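/- arXiv:1704.06629 — 6 statements merged into one kernel-verified Lean document; each statement's English description precedes it below -/
import Mathlib

section
/- In the Latent Block Model under assumptions H1–H4, conditionally on the event Ω₁ that (z*,w*) is c/2-regular, there exists a positive constant C such that for all assignment pairs (z,w) ∈ S(z*,w*,C): Λ̃(z,w) ≤ −(c·δ(α*)/4)·( d·‖z−z*‖_{0,∼} + n·‖w−w*‖_{0,∼} ). -/
/-!
The negative of `Gfun` is the sum over all cells of the divergences
`KL(α*_{z*_i w*_j}, α_{z_i w_j})`, so an upper bound on `Λ̃` is a lower bound on this sum that is
uniform in `α`. A relabelling of the classes can be absorbed into `α`, hence `z` and `w` may be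
assumed to be optimally aligned with `z*` and `w*`. If `δ(α*) ≤ 0` nonnegativity of the divergence
is enough. Otherwise fix a small threshold `κ > 0` and distinguish two cases (`sum_KLdiv_ge`).

* Every `KL(α*_{kl}, α_{kl})` is below `κ`. By strict convexity `α` is then close to `α*`
  (`exists_KLdiv_lower`), so replacing `α*` by `α` in the second argument costs at most `δ/4`
  (`eventually_KLdiv_stable`). A misclassified row has divergence at least `3δ/4` on all correctly
  classified columns of a suitable class, of which there are at least `(c/2 - C) d ≥ 3cd/8`.
  The same holds for misclassified columns on correctly classified rows. The two families of cells
  are disjoint, so the contributions add up, with constant `9cδ/32 ≥ cδ/4`.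
* Some `KL(α*_{kl}, α_{kl})` is at least `κ`. The correctly classified cells of block `(k, l)`
  already contribute `(3c/8)² κ n d`, which beats the target since the latter is at most
  `(cδ/4) 2 C n d` and `C ≤ c κ / (4δ)`.
-/

open scoped BigOperators

noncomputable section

/-- number of rows assigned to class `k` by the label function `z`. -/
def catCount {n g : ℕ} (z : Fin n → Fin g) (k : Fin g) : ℕ :=
  (Finset.univ.filter fun i => z i = k).card

/-- Kullback divergence between `φ(·,α)` and `φ(·,α')` in an exponential family with
log-partition `ψ`: `KL(α,α') = ψ'(α)(α−α') + ψ(α') − ψ(α)`. -/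
def KLdiv (ψ : ℝ → ℝ) (a a' : ℝ) : ℝ :=
  deriv ψ a * (a - a') + ψ a' - ψ a

/-- `G(α,z,w) = E_{θ*}[log (p(x|z,w;θ)/p(x|z*,w*;θ*)) | z*,w*]`. -/
def Gfun (ψ : ℝ → ℝ) {n d g m : ℕ} (αs : Fin g → Fin m → ℝ)
    (zs : Fin n → Fin g) (ws : Fin d → Fin m)
    (α : Fin g → Fin m → ℝ) (z : Fin n → Fin g) (w : Fin d → Fin m) : ℝ :=
  ∑ i, ∑ j, ((α (z i) (w j) - αs (zs i) (ws j)) * deriv ψ (αs (zs i) (ws j))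
      - ψ (α (z i) (w j)) + ψ (αs (zs i) (ws j)))

/-- Expected profile log-likelihood ratio `Λ̃(z,w) = max_θ G(θ,z,w)`. -/
def Lambdatilde (ψ : ℝ → ℝ) (Adom : Set ℝ) {n d g m : ℕ} (αs : Fin g → Fin m → ℝ)
    (zs : Fin n → Fin g) (ws : Fin d → Fin m)
    (z : Fin n → Fin g) (w : Fin d → Fin m) : ℝ :=
  ⨆ α : {α : Fin g → Fin m → ℝ // ∀ k l, α k l ∈ Adom},
    Gfun ψ αs zs ws (α : Fin g → Fin m → ℝ) z w

/-- Hamming distance between label functions, up to label permutation: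
`‖z − z*‖_{0,∼} = inf_{z' ∼ z} ‖z' − z*‖₀`. -/
def hamSim {n g : ℕ} (z zs : Fin n → Fin g) : ℕ :=
  ⨅ s : Equiv.Perm (Fin g), (Finset.univ.filter fun i => z i ≠ s (zs i)).card

/-- Class distinctness
`δ(α) = min{min_{ℓ≠ℓ'} max_k KL(α_{kℓ}, α_{kℓ'}), min_{k≠k'} max_ℓ KL(α_{kℓ}, α_{k'ℓ})}`. -/
def deltaDist (ψ : ℝ → ℝ) {g m : ℕ} (αs : Fin g → Fin m → ℝ) : ℝ :=
  min (⨅ p : {p : Fin m × Fin m // p.1 ≠ p.2}, ⨆ k, KLdiv ψ (αs k (p : Fin m × Fin m).1) (αs k (p : Fin m × Fin m).2))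
      (⨅ p : {p : Fin g × Fin g // p.1 ≠ p.2}, ⨆ l, KLdiv ψ (αs (p : Fin g × Fin g).1 l) (αs (p : Fin g × Fin g).2 l))

open scoped Topology

/-! ### The divergence of a strictly convex function -/

lemma KLdiv_self (ψ : ℝ → ℝ) (a : ℝ) : KLdiv ψ a a = 0 := by simp [KLdiv]

/-- A strictly convex function lies strictly above its tangent lines. -/
lemma KLdiv_pos {ψ : ℝ → ℝ} {A : Set ℝ} (hψ : StrictConvexOn ℝ A ψ) {a b : ℝ}
    (ha : a ∈ A) (hb : b ∈ A) (hd : HasDerivAt ψ (deriv ψ a) a) (hab : a ≠ b) :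
    0 < KLdiv ψ a b := by
  unfold KLdiv
  rcases lt_or_gt_of_ne hab with h | h
  · have := hψ.lt_slope_of_hasDerivAt ha hb h hd
    rw [slope_def_field, lt_div_iff₀ (by linarith)] at this
    linarith
  · have := hψ.slope_lt_of_hasDerivAt hb ha h hd
    rw [slope_def_field, div_lt_iff₀ (by linarith)] at this
    linarith

lemma KLdiv_nonneg {ψ : ℝ → ℝ} {A : Set ℝ} (hψ : StrictConvexOn ℝ A ψ) {a b : ℝ}
    (ha : a ∈ A) (hb : b ∈ A) (hd : HasDerivAt ψ (deriv ψ a) a) : 0 ≤ KLdiv ψ a b := by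
  by_cases hab : a = b
  · rw [← hab, KLdiv_self]
  · exact (KLdiv_pos hψ ha hb hd hab).le

/-- The divergence from `a` increases when its second argument moves away from `a`. -/
lemma KLdiv_le_of_mem_segment {ψ : ℝ → ℝ} {A : Set ℝ} (hψ : StrictConvexOn ℝ A ψ) {a b p : ℝ}
    (ha : a ∈ A) (hb : b ∈ A) (hd : HasDerivAt ψ (deriv ψ a) a) (hp : p ∈ segment ℝ a b) :
    KLdiv ψ a p ≤ KLdiv ψ a b := by
  obtain ⟨s, t, hs, ht, hst, rfl⟩ := hp
  have h0 := KLdiv_nonneg hψ ha hb hd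
  have h1 := hψ.convexOn.2 ha hb hs ht hst
  have h2 : KLdiv ψ a (s • a + t • b) ≤ t * KLdiv ψ a b := by
    obtain rfl : s = 1 - t := by linarith
    simp only [KLdiv, smul_eq_mul] at h1 ⊢
    linarith
  nlinarith

/-- Away from `a` the divergence from `a` is bounded below, uniformly over the whole (possibly
unbounded) parameter domain. -/
lemma exists_KLdiv_lower {ψ : ℝ → ℝ} {A : Set ℝ} (hA : Convex ℝ A)
    (hψ : StrictConvexOn ℝ A ψ) {a η : ℝ} (ha : a ∈ A) (hd : HasDerivAt ψ (deriv ψ a) a)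
    (hη : 0 < η) :
    ∃ κ > 0, ∀ b ∈ A, KLdiv ψ a b < κ → |b - a| < η := by
  have key : ∀ p, p ≠ a → ∃ κ > 0, ∀ b ∈ A, p ∈ segment ℝ a b → κ ≤ KLdiv ψ a b := by
    intro p hp
    by_cases hpA : p ∈ A
    · exact ⟨KLdiv ψ a p, KLdiv_pos hψ ha hpA hd hp.symm,
        fun b hb h => KLdiv_le_of_mem_segment hψ ha hb hd h⟩
    · exact ⟨1, one_pos, fun b hb h => absurd (hA.segment_subset ha hb h) hpA⟩
  obtain ⟨κ₁, h₁, H₁⟩ := key (a + η) (by simp [hη.ne'])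
  obtain ⟨κ₂, h₂, H₂⟩ := key (a - η) (by simp [hη.ne'])
  refine ⟨min κ₁ κ₂, lt_min h₁ h₂, fun b hb hlt => ?_⟩
  rw [lt_min_iff] at hlt
  by_contra hcon
  rw [not_lt, le_abs] at hcon
  rcases hcon with h | h
  · have := H₁ b hb (by rw [segment_eq_Icc (by linarith)]; constructor <;> linarith)
    linarith
  · have := H₂ b hb (by
      rw [segment_symm, segment_eq_Icc (by linarith)]; constructor <;> linarith)
    linarith

/-- If `KL(a, b)` is small enough, then `KL(e, b)` falls short of `KL(e, a)` by at most `ε`. -/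
lemma eventually_KLdiv_stable {ψ : ℝ → ℝ} {A : Set ℝ} (hA : Convex ℝ A)
    (hψ : StrictConvexOn ℝ A ψ) {a ε : ℝ} (e : ℝ) (ha : a ∈ A)
    (hd : HasDerivAt ψ (deriv ψ a) a) (hε : 0 < ε) :
    ∀ᶠ κ in 𝓝[>] (0 : ℝ), ∀ b ∈ A, KLdiv ψ a b < κ → KLdiv ψ e a - ε ≤ KLdiv ψ e b := by
  have hcont : ContinuousAt (fun b => KLdiv ψ e b) a := by
    have := hd.continuousAt
    unfold KLdiv
    fun_prop
  obtain ⟨η, hη, H⟩ := Metric.continuousAt_iff.1 hcont ε hε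
  obtain ⟨κ, hκ, K⟩ := exists_KLdiv_lower hA hψ ha hd hη
  filter_upwards [Ioo_mem_nhdsGT hκ] with κ' hκ' b hb hlt
  have := H (x := b) (by rw [Real.dist_eq]; exact K b hb (hlt.trans hκ'.2))
  rw [Real.dist_eq, abs_lt] at this
  linarith

/-! ### Counting and labels -/

/-- A nonnegative array is bounded below by the mass of the bad rows on the good columns plus the
mass of the bad columns on the good rows; these two regions are disjoint. -/
lemma card_mul_add_card_mul_le_sum {n d : ℕ} (f : Fin n → Fin d → ℝ) (hf : ∀ i j, 0 ≤ f i j)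
    (P : Finset (Fin n)) (Q : Finset (Fin d)) (a b : ℝ)
    (hP : ∀ i ∈ P, a ≤ ∑ j ∈ Qᶜ, f i j) (hQ : ∀ j ∈ Q, b ≤ ∑ i ∈ Pᶜ, f i j) :
    (P.card : ℝ) * a + (Q.card : ℝ) * b ≤ ∑ i, ∑ j, f i j := by
  have h1 : (P.card : ℝ) * a ≤ ∑ i ∈ P, ∑ j, f i j := by
    rw [← nsmul_eq_mul]
    refine Finset.card_nsmul_le_sum _ _ _ fun i hi => (hP i hi).trans ?_
    exact Finset.sum_le_sum_of_subset_of_nonneg (Finset.subset_univ _) fun j _ _ => hf i j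
  have h2 : (Q.card : ℝ) * b ≤ ∑ i ∈ Pᶜ, ∑ j, f i j := by
    rw [Finset.sum_comm, ← nsmul_eq_mul]
    refine (Finset.card_nsmul_le_sum Q _ _ hQ).trans ?_
    exact Finset.sum_le_sum_of_subset_of_nonneg (Finset.subset_univ _)
      fun j _ _ => Finset.sum_nonneg fun i _ => hf i j
  rw [← Finset.sum_add_sum_compl P]
  linarith

/-- Each class keeps at least `(c/2 - C) n ≥ (3c/8) n` correctly labelled elements. -/
lemma card_good_ge {n g : ℕ} {c C : ℝ} (hC : C ≤ c / 8) (z zs : Fin n → Fin g) (k : Fin g)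
    (hreg : c * (n : ℝ) / 2 ≤ (catCount zs k : ℝ))
    (hz : ((Finset.univ.filter fun i => z i ≠ zs i).card : ℝ) ≤ C * n) :
    3 * c / 8 * n ≤ ((Finset.univ.filter fun i => zs i = k ∧ z i = zs i).card : ℝ) := by
  have h : catCount zs k ≤ (Finset.univ.filter fun i => zs i = k ∧ z i = zs i).card
      + (Finset.univ.filter fun i => z i ≠ zs i).card := by
    unfold catCount
    refine (Finset.card_le_card ?_).trans (Finset.card_union_le _ _)
    intro i hi
    simp only [Finset.mem_filter, Finset.mem_univ, true_and, Finset.mem_union] at hi ⊢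
    tauto
  have h' : (catCount zs k : ℝ) ≤ ((Finset.univ.filter fun i => zs i = k ∧ z i = zs i).card : ℝ)
      + ((Finset.univ.filter fun i => z i ≠ zs i).card : ℝ) := by exact_mod_cast h
  have hn : (0 : ℝ) ≤ n := Nat.cast_nonneg n
  nlinarith

lemma Gfun_eq_neg_sum_KLdiv (ψ : ℝ → ℝ) {n d g m : ℕ} (αs : Fin g → Fin m → ℝ)
    (zs : Fin n → Fin g) (ws : Fin d → Fin m) (α : Fin g → Fin m → ℝ)
    (z : Fin n → Fin g) (w : Fin d → Fin m) :
    Gfun ψ αs zs ws α z w = -∑ i, ∑ j, KLdiv ψ (αs (zs i) (ws j)) (α (z i) (w j)) := by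
  simp only [Gfun, KLdiv, ← Finset.sum_neg_distrib]
  refine Finset.sum_congr rfl fun i _ => Finset.sum_congr rfl fun j _ => ?_
  ring

lemma exists_perm_hamSim {n g : ℕ} (z zs : Fin n → Fin g) :
    ∃ s : Equiv.Perm (Fin g),
      (Finset.univ.filter fun i => s.symm (z i) ≠ zs i).card = hamSim z zs := by
  obtain ⟨s, hs⟩ := Nat.sInf_mem (Set.range_nonempty fun s : Equiv.Perm (Fin g) =>
    (Finset.univ.filter fun i => z i ≠ s (zs i)).card)
  refine ⟨s, Eq.trans ?_ hs⟩
  simp only [ne_eq, Equiv.symm_apply_eq]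

/-! ### Lower bound on the total divergence -/

/-- Two distinct row classes differ by at least `δ` in some column class. -/
lemma exists_row_gap {ψ : ℝ → ℝ} {g m : ℕ} (hm : 0 < m) (αs : Fin g → Fin m → ℝ)
    {k k' : Fin g} (h : k ≠ k') :
    ∃ l, deltaDist ψ αs ≤ KLdiv ψ (αs k l) (αs k' l) := by
  have : Nonempty (Fin m) := ⟨⟨0, hm⟩⟩
  obtain ⟨l, hl⟩ := exists_eq_ciSup_of_finite (f := fun l => KLdiv ψ (αs k l) (αs k' l))
  refine ⟨l, (min_le_right _ _).trans ?_⟩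
  refine (ciInf_le (Set.finite_range _).bddBelow
    (⟨(k, k'), h⟩ : {p : Fin g × Fin g // p.1 ≠ p.2})).trans ?_
  exact hl.ge

/-- Two distinct column classes differ by at least `δ` in some row class. -/
lemma exists_col_gap {ψ : ℝ → ℝ} {g m : ℕ} (hg : 0 < g) (αs : Fin g → Fin m → ℝ)
    {l l' : Fin m} (h : l ≠ l') :
    ∃ k, deltaDist ψ αs ≤ KLdiv ψ (αs k l) (αs k l') := by
  have : Nonempty (Fin g) := ⟨⟨0, hg⟩⟩
  obtain ⟨k, hk⟩ := exists_eq_ciSup_of_finite (f := fun k => KLdiv ψ (αs k l) (αs k l'))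
  refine ⟨k, (min_le_left _ _).trans ?_⟩
  refine (ciInf_le (Set.finite_range _).bddBelow
    (⟨(l, l'), h⟩ : {p : Fin m × Fin m // p.1 ≠ p.2})).trans ?_
  exact hk.ge

/-- The bound for one parameter `α` and aligned labels. The number `κ` is a threshold below which
closeness of `α` to `αs` in divergence costs at most a quarter of the class distinctness. -/
lemma sum_KLdiv_ge {g m n d : ℕ} (hg : 0 < g) (hm : 0 < m) {ψ : ℝ → ℝ} {A : Set ℝ}
    {c C κ : ℝ} (hc : 0 < c) (hκ : 0 < κ) {αs α : Fin g → Fin m → ℝ}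
    (hδ : 0 < deltaDist ψ αs) (hCc : C ≤ c / 8)
    (hCκ : 4 * deltaDist ψ αs * C ≤ c * κ) (hα : ∀ k l, α k l ∈ A)
    (hnn : ∀ k l, ∀ b ∈ A, 0 ≤ KLdiv ψ (αs k l) b)
    (hstab : ∀ k l k' l', ∀ b ∈ A, KLdiv ψ (αs k l) b < κ →
      KLdiv ψ (αs k' l') (αs k l) - deltaDist ψ αs / 4 ≤ KLdiv ψ (αs k' l') b)
    (zs z : Fin n → Fin g) (ws w : Fin d → Fin m)
    (hzs : ∀ k, c * (n : ℝ) / 2 ≤ (catCount zs k : ℝ))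
    (hws : ∀ l, c * (d : ℝ) / 2 ≤ (catCount ws l : ℝ))
    (hz : ((Finset.univ.filter fun i => z i ≠ zs i).card : ℝ) ≤ C * n)
    (hw : ((Finset.univ.filter fun j => w j ≠ ws j).card : ℝ) ≤ C * d) :
    c * deltaDist ψ αs / 4 *
        ((d : ℝ) * ((Finset.univ.filter fun i => z i ≠ zs i).card : ℝ)
          + (n : ℝ) * ((Finset.univ.filter fun j => w j ≠ ws j).card : ℝ)) ≤
      ∑ i, ∑ j, KLdiv ψ (αs (zs i) (ws j)) (α (z i) (w j)) := by
  set δ := deltaDist ψ αs with hδdef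
  have hn : (0 : ℝ) ≤ n := Nat.cast_nonneg n
  have hd : (0 : ℝ) ≤ d := Nat.cast_nonneg d
  have hf : ∀ i j, 0 ≤ KLdiv ψ (αs (zs i) (ws j)) (α (z i) (w j)) :=
    fun i j => hnn _ _ _ (hα _ _)
  by_cases hclose : ∀ k l, KLdiv ψ (αs k l) (α k l) < κ
  · set P := Finset.univ.filter fun i => z i ≠ zs i with hP
    set Q := Finset.univ.filter fun j => w j ≠ ws j with hQ
    have hrow : ∀ i ∈ P, 3 * c / 8 * d * (3 / 4 * δ) ≤
        ∑ j ∈ Qᶜ, KLdiv ψ (αs (zs i) (ws j)) (α (z i) (w j)) := by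
      intro i hi
      rw [hP, Finset.mem_filter] at hi
      obtain ⟨l, hl⟩ := exists_row_gap (ψ := ψ) hm αs (Ne.symm hi.2)
      have hcard := card_good_ge hCc w ws l (hws l) hw
      calc 3 * c / 8 * d * (3 / 4 * δ)
          ≤ ((Finset.univ.filter fun j => ws j = l ∧ w j = ws j).card : ℝ) * (3 / 4 * δ) := by
            gcongr
        _ ≤ ∑ j ∈ Finset.univ.filter (fun j => ws j = l ∧ w j = ws j),
              KLdiv ψ (αs (zs i) (ws j)) (α (z i) (w j)) := by
            rw [← nsmul_eq_mul]
            refine Finset.card_nsmul_le_sum _ _ _ fun j hj => ?_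
            obtain ⟨-, rfl, hj2⟩ := Finset.mem_filter.1 hj
            rw [hj2]
            have := hstab (z i) (ws j) (zs i) (ws j) _ (hα _ _) (hclose _ _)
            linarith
        _ ≤ _ := by
            refine Finset.sum_le_sum_of_subset_of_nonneg ?_ fun j _ _ => hf i j
            intro j hj
            simp [hQ, (Finset.mem_filter.1 hj).2.2]
    have hcol : ∀ j ∈ Q, 3 * c / 8 * n * (3 / 4 * δ) ≤
        ∑ i ∈ Pᶜ, KLdiv ψ (αs (zs i) (ws j)) (α (z i) (w j)) := by
      intro j hj
      rw [hQ, Finset.mem_filter] at hj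
      obtain ⟨k, hk⟩ := exists_col_gap (ψ := ψ) hg αs (Ne.symm hj.2)
      have hcard := card_good_ge hCc z zs k (hzs k) hz
      calc 3 * c / 8 * n * (3 / 4 * δ)
          ≤ ((Finset.univ.filter fun i => zs i = k ∧ z i = zs i).card : ℝ) * (3 / 4 * δ) := by
            gcongr
        _ ≤ ∑ i ∈ Finset.univ.filter (fun i => zs i = k ∧ z i = zs i),
              KLdiv ψ (αs (zs i) (ws j)) (α (z i) (w j)) := by
            rw [← nsmul_eq_mul]
            refine Finset.card_nsmul_le_sum _ _ _ fun i hi => ?_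
            obtain ⟨-, rfl, hi2⟩ := Finset.mem_filter.1 hi
            rw [hi2]
            have := hstab (zs i) (w j) (zs i) (ws j) _ (hα _ _) (hclose _ _)
            linarith
        _ ≤ _ := by
            refine Finset.sum_le_sum_of_subset_of_nonneg ?_ fun i _ _ => hf i j
            intro i hi
            simp [hP, (Finset.mem_filter.1 hi).2.2]
    refine le_trans ?_ (card_mul_add_card_mul_le_sum _ hf P Q _ _ hrow hcol)
    -- `3c/8 * 3/4 = 9c/32`, which exceeds the required `c/4`.
    have h1 : 0 ≤ c * δ * (d * (P.card : ℝ)) := by positivity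
    have h2 : 0 ≤ c * δ * (n * (Q.card : ℝ)) := by positivity
    linarith
  · push Not at hclose
    obtain ⟨k, l, hkl⟩ := hclose
    have hrows := card_good_ge hCc z zs k (hzs k) hz
    have hcols := card_good_ge hCc w ws l (hws l) hw
    set R := Finset.univ.filter fun i => zs i = k ∧ z i = zs i with hR
    set S := Finset.univ.filter fun j => ws j = l ∧ w j = ws j with hS
    -- The correctly labelled block `(k, l)` alone contributes order `n d`.
    have hblock : (R.card : ℝ) * ((S.card : ℝ) * κ) ≤
        ∑ i, ∑ j, KLdiv ψ (αs (zs i) (ws j)) (α (z i) (w j)) := by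
      refine le_trans ?_ (Finset.sum_le_sum_of_subset_of_nonneg (Finset.subset_univ R)
        fun i _ _ => Finset.sum_nonneg fun j _ => hf i j)
      rw [← nsmul_eq_mul]
      refine Finset.card_nsmul_le_sum _ _ _ fun i hi => ?_
      refine le_trans ?_ (Finset.sum_le_sum_of_subset_of_nonneg (Finset.subset_univ S)
        fun j _ _ => hf i j)
      rw [← nsmul_eq_mul]
      refine Finset.card_nsmul_le_sum _ _ _ fun j hj => ?_
      obtain ⟨-, hi1, hi2⟩ := Finset.mem_filter.1 hi
      obtain ⟨-, hj1, hj2⟩ := Finset.mem_filter.1 hj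
      rwa [hi2, hj2, hi1, hj1]
    refine le_trans ?_ hblock
    calc _ ≤ c * δ / 4 * ((d : ℝ) * (C * n) + n * (C * d)) := by gcongr
      _ = c * (n * d) / 8 * (4 * δ * C) := by ring
      _ ≤ c * (n * d) / 8 * (c * κ) := by gcongr
      _ ≤ 3 * c / 8 * n * (3 * c / 8 * d * κ) := by
        have : 0 ≤ c ^ 2 * κ * (n * d) := by positivity
        linarith
      _ ≤ _ := by gcongr

/-- **Proposition (local upper bound for `Λ̃`).**  In the LBM under H1–H4, conditionally on
`(z*,w*)` being `c/2`-regular, there is a constant `C > 0` such that for all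
`(z,w) ∈ S(z*,w*,C)`:
`Λ̃(z,w) ≤ −(c δ(α*)/4) (d ‖z−z*‖_{0,∼} + n ‖w−w*‖_{0,∼})`. -/
theorem stmt_6 {g m : ℕ} (hg : 0 < g) (hm : 0 < m)
    (ψ : ℝ → ℝ) (Adom : Set ℝ) (hAconv : Convex ℝ Adom)
    (hdiff : ∀ a ∈ Adom, HasDerivAt ψ (deriv ψ a) a)
    (hψsmooth : ContDiffOn ℝ 2 ψ (interior Adom))
    -- H3 (injectivity of `α ↦ φ(·,α)`): analytically, strict convexity of `ψ`
    (hstrict : StrictConvexOn ℝ Adom ψ)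
    (c : ℝ) (hc : 0 < c) (Cα : Set ℝ) (hCα : IsCompact Cα) (hCαA : Cα ⊆ interior Adom)
    (αs : Fin g → Fin m → ℝ)
    -- H1 for the true parameter
    (hαsC : ∀ k l, αs k l ∈ Cα)
    -- H4
    (hrowsdist : ∀ k k', (∀ l, αs k l = αs k' l) → k = k')
    (hcolsdist : ∀ l l', (∀ k, αs k l = αs k l') → l = l') :
    ∃ C : ℝ, 0 < C ∧
      ∀ (n d : ℕ) (zs : Fin n → Fin g) (ws : Fin d → Fin m),
        (∀ k, c * (n : ℝ) / 2 ≤ (catCount zs k : ℝ)) →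
        (∀ l, c * (d : ℝ) / 2 ≤ (catCount ws l : ℝ)) →
        ∀ (z : Fin n → Fin g) (w : Fin d → Fin m),
          (hamSim z zs : ℝ) ≤ C * (n : ℝ) →
          (hamSim w ws : ℝ) ≤ C * (d : ℝ) →
          Lambdatilde ψ Adom αs zs ws z w ≤
            -(c * deltaDist ψ αs / 4) *
              ((d : ℝ) * (hamSim z zs : ℝ) + (n : ℝ) * (hamSim w ws : ℝ)) := by
  have hA : ∀ k l, αs k l ∈ Adom := fun k l => interior_subset (hCαA (hαsC k l))
  have hnn : ∀ k l, ∀ b ∈ Adom, 0 ≤ KLdiv ψ (αs k l) b := fun k l b hb =>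
    KLdiv_nonneg hstrict (hA k l) hb (hdiff _ (hA k l))
  have : Nonempty {α : Fin g → Fin m → ℝ // ∀ k l, α k l ∈ Adom} := ⟨⟨αs, hA⟩⟩
  rcases le_or_gt (deltaDist ψ αs) 0 with hδ | hδ
  · -- This covers `g = 1` or `m = 1`, where an infimum over an empty index set makes `δ = 0`;
    -- only `Λ̃ ≤ 0` is then claimed.
    refine ⟨1, one_pos, fun n d zs ws _ _ z w _ _ => ciSup_le fun α => ?_⟩
    rw [Gfun_eq_neg_sum_KLdiv]
    have h1 : 0 ≤ ∑ i, ∑ j, KLdiv ψ (αs (zs i) (ws j)) (α.1 (z i) (w j)) :=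
      Finset.sum_nonneg fun i _ => Finset.sum_nonneg fun j _ => hnn _ _ _ (α.2 _ _)
    have h2 : 0 ≤ -(c * deltaDist ψ αs / 4) *
        ((d : ℝ) * (hamSim z zs : ℝ) + (n : ℝ) * (hamSim w ws : ℝ)) := by
      refine mul_nonneg ?_ (by positivity)
      nlinarith
    linarith
  · have hev : ∀ᶠ κ in 𝓝[>] (0 : ℝ), ∀ k l k' l', ∀ b ∈ Adom, KLdiv ψ (αs k l) b < κ →
        KLdiv ψ (αs k' l') (αs k l) - deltaDist ψ αs / 4 ≤ KLdiv ψ (αs k' l') b := by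
      simp only [Filter.eventually_all]
      exact fun k l k' l' => eventually_KLdiv_stable hAconv hstrict _ (hA k l)
        (hdiff _ (hA k l)) (by positivity)
    obtain ⟨κ, hstab, hκ⟩ := (hev.and self_mem_nhdsWithin).exists
    replace hκ : 0 < κ := hκ
    have hCpos : 0 < min (c / 8) (c * κ / (4 * deltaDist ψ αs)) := by positivity
    refine ⟨_, hCpos, fun n d zs ws hzs hws z w hz hw => ciSup_le fun α => ?_⟩
    obtain ⟨s, hs⟩ := exists_perm_hamSim z zs
    obtain ⟨t, ht⟩ := exists_perm_hamSim w ws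
    rw [← hs] at hz
    rw [← ht] at hw
    -- The relabelling by `s` and `t` is absorbed into the parameter `α`.
    have := sum_KLdiv_ge hg hm hc hκ (α := fun k l => α.1 (s k) (t l)) hδ
      (min_le_left _ _) (by
        have := min_le_right (c / 8) (c * κ / (4 * deltaDist ψ αs))
        rw [le_div_iff₀ (by positivity)] at this
        linarith) (fun k l => α.2 _ _) hnn hstab
      zs (fun i => s.symm (z i)) ws (fun j => t.symm (w j)) hzs hws hz hw
    simp only [Equiv.apply_symm_apply] at this
    rw [hs, ht] at this
    rw [Gfun_eq_neg_sum_KLdiv]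
    linarith
end
end

section
/- Contribution of global assignments: in the Latent Block Model under assumptions H1–H4, assume log(d)/n → 0 and log(n)/d → 0, and choose t_{nd} decreasing to 0 with t_{nd} ≫ max((n+d)/(nd), log(nd)/√(nd)). Then, conditionally on the event Ω₁ that (z*,w*) is c/2-regular, and for n,d large enough that 2√(2nd)·t_{nd} ≥ gm, sup_{θ∈Θ} Σ_{(z,w) ∉ S(z*,w*,t_{nd})} p(z,w,x;θ) = o_P( p(z*,w*,x;θ*) ). -/
/-!
The proof is a Hellinger-type union bound.

Fix the data size `n × d`. For a fixed assignment `(z, w)` and connectivity matrix `α`, the square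
root of the conditional likelihood ratio against the truth has expectation equal to a product of
Hellinger affinities, hence at most `exp (-∑ hell)`, the sum running over the cells `(i, j)`
(`integral_sqrtRatio_le`).

The total divergence `∑ hell` is at least a constant times `n d t` as soon as `(z, w)` lies outside
the ball of radius `t` (`sum_ge_of_hamSim_lt`). Indeed two distinct true parameters cannot both be
close to the same third one (`exists_separation`, by the triangle inequality for the Hellinger
distance), so merging two true classes in one proposed class costs a constant per cell; if the cost
were small, the dominant entries of the confusion matrix would define a label permutation up to
which `z` and the true assignment almost agree.

The supremum over the parameter is reduced to a finite net of mesh `1 / (n d)`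
(`exists_net`, `exists_lipschitz`): the error in the log-likelihood is `O(n + d)` on the event
`∑ |x| ≤ n d (n + d)`, whose complement has probability `O(1 / (n + d))` because the family has a
first moment in the interior of its domain (`integrable_abs_expFam`). The class proportions, the
number of assignments and the cardinality of the net contribute further factors `exp (O(n + d))`.
Since `n d t` dominates `n + d`, Markov's inequality concludes (`prob_le`, `exponential_bound`).

No measurability of `b` is assumed. The law is handled through the base measure `b(x) dx`, against
which every member of the family has the smooth density `exp (a x - ψ a)` (`expFam_eq`).
-/

open MeasureTheory Filter
open scoped BigOperators ENNReal Topology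

noncomputable section

/-- The exponential-family measure with density `φ(x,α) = b(x) exp(αx − ψ(α))`. -/
def expFam (b ψ : ℝ → ℝ) (a : ℝ) : Measure ℝ :=
  volume.withDensity fun x => ENNReal.ofReal (b x * Real.exp (a * x - ψ a))

/-- LBM parameters `θ = (π, ρ, α)`. -/
abbrev Param (g m : ℕ) : Type := (Fin g → ℝ) × (Fin m → ℝ) × (Fin g → Fin m → ℝ)

/-- Complete-data likelihood `p(x,z,w;θ)` of the LBM. -/
def completeLik (b ψ : ℝ → ℝ) {n d g m : ℕ} (θ : Param g m)
    (z : Fin n → Fin g) (w : Fin d → Fin m) (x : Fin n × Fin d → ℝ) : ℝ :=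
  (∏ i, θ.1 (z i)) * (∏ j, θ.2.1 (w j)) *
    ∏ p : Fin n × Fin d,
      (b (x p) * Real.exp (θ.2.2 (z p.1) (w p.2) * x p - ψ (θ.2.2 (z p.1) (w p.2))))

/-! ### The exponential family and its Hellinger distance -/

section ExpFamily

/-- Change of density when the first factor need not be measurable: `withDensity` then uses lower
integrals, and these are compatible with multiplication by a measurable positive finite factor. -/
lemma withDensity_mul_of_pos (μ : Measure ℝ) [SFinite μ] (f r : ℝ → ℝ≥0∞) (hr : Measurable r)
    (hr0 : ∀ x, r x ≠ 0) (hrtop : ∀ x, r x ≠ ∞) :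
    μ.withDensity (f * r) = (μ.withDensity f).withDensity r := by
  obtain ⟨u, hu, huf, hueq⟩ := exists_measurable_le_withDensity_eq μ f
  obtain ⟨v, hv, hvf, hveq⟩ := exists_measurable_le_withDensity_eq μ (f * r)
  apply le_antisymm
  · have h1 : v = (fun x => v x / r x) * r := by
      funext x
      simp [ENNReal.div_mul_cancel (hr0 x) (hrtop x)]
    have h2 : μ.withDensity (fun x => v x / r x) ≤ μ.withDensity f := by
      apply withDensity_mono
      refine Eventually.of_forall fun x => ?_
      exact ENNReal.div_le_of_le_mul (hvf x)
    have hvr : Measurable fun x => v x / r x := hv.div hr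
    rw [← hveq, h1, withDensity_mul μ hvr hr]
    refine Measure.le_intro fun s hs _ => ?_
    rw [withDensity_apply _ hs, withDensity_apply _ hs]
    exact lintegral_mono' (Measure.restrict_mono le_rfl h2) le_rfl
  · rw [← hueq, ← withDensity_mul μ hu hr]
    apply withDensity_mono
    refine Eventually.of_forall fun x => ?_
    exact mul_le_mul_left (huf x) _

/-- The dominating measure `b(x) dx` of the exponential family. -/
def baseMeas (b : ℝ → ℝ) : Measure ℝ := volume.withDensity fun x => ENNReal.ofReal (b x)

lemma expFam_eq {b : ℝ → ℝ} (hb : ∀ x, 0 ≤ b x) (ψ : ℝ → ℝ) (a : ℝ) :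
    expFam b ψ a =
      (baseMeas b).withDensity fun x => ENNReal.ofReal (Real.exp (a * x - ψ a)) := by
  unfold expFam baseMeas
  rw [← withDensity_mul_of_pos]
  · congr 1
    funext x
    simp [ENNReal.ofReal_mul (hb x)]
  · fun_prop
  · intro x
    simp [Real.exp_pos]
  · intro x
    simp

lemma expFam_ae_pos {b : ℝ → ℝ} (hb : ∀ x, 0 ≤ b x) (ψ : ℝ → ℝ) (a : ℝ) :
    ∀ᵐ x ∂(expFam b ψ a), 0 < b x := by
  rw [expFam_eq hb]
  refine (withDensity_absolutelyContinuous _ _).ae_le ?_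
  obtain ⟨u, hu, huf, hueq⟩ :=
    exists_measurable_le_withDensity_eq volume (fun x => ENNReal.ofReal (b x))
  unfold baseMeas
  rw [← hueq]
  have h : ∀ᵐ x ∂(volume.withDensity u), u x ≠ 0 := by
    rw [ae_withDensity_iff hu]
    exact Eventually.of_forall fun x hx => hx
  filter_upwards [h] with x hx
  have h1 : 0 < ENNReal.ofReal (b x) := lt_of_lt_of_le (pos_iff_ne_zero.mpr hx) (huf x)
  simpa using h1

/-- Integrals under the exponential family, written against the base measure. -/
lemma integral_expFam {b : ℝ → ℝ} (hb : ∀ x, 0 ≤ b x) (ψ : ℝ → ℝ) (a : ℝ) (f : ℝ → ℝ) :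
    ∫ x, f x ∂(expFam b ψ a) = ∫ x, Real.exp (a * x - ψ a) * f x ∂(baseMeas b) := by
  rw [expFam_eq hb, integral_withDensity_eq_integral_toReal_smul (by fun_prop) (by simp)]
  simp [ENNReal.toReal_ofReal (Real.exp_nonneg _)]

lemma integrable_expFam {b : ℝ → ℝ} (hb : ∀ x, 0 ≤ b x) (ψ : ℝ → ℝ) (a : ℝ) (f : ℝ → ℝ) :
    Integrable f (expFam b ψ a) ↔
      Integrable (fun x => Real.exp (a * x - ψ a) * f x) (baseMeas b) := by
  rw [expFam_eq hb, integrable_withDensity_iff_integrable_smul' (by fun_prop) (by simp)]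
  simp [ENNReal.toReal_ofReal (Real.exp_nonneg _)]

lemma integrable_density {b : ℝ → ℝ} (hb : ∀ x, 0 ≤ b x) (ψ : ℝ → ℝ) (a : ℝ)
    (h : IsProbabilityMeasure (expFam b ψ a)) :
    Integrable (fun x => Real.exp (a * x - ψ a)) (baseMeas b) := by
  have := (integrable_expFam hb ψ a (fun _ => 1)).1 (integrable_const _)
  simpa using this

lemma integral_density {b : ℝ → ℝ} (hb : ∀ x, 0 ≤ b x) (ψ : ℝ → ℝ) (a : ℝ)
    (h : IsProbabilityMeasure (expFam b ψ a)) :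
    ∫ x, Real.exp (a * x - ψ a) ∂(baseMeas b) = 1 := by
  have := integral_expFam hb ψ a (fun _ => 1)
  simpa using this.symm

/-- Square root of the exponential-family density with respect to the base measure. -/
def sqrtDens (ψ : ℝ → ℝ) (a x : ℝ) : ℝ := Real.exp ((a * x - ψ a) / 2)

/-- Squared Hellinger distance between two members of the exponential family. -/
def hell (b ψ : ℝ → ℝ) (a a' : ℝ) : ℝ :=
  (∫ x, (sqrtDens ψ a x - sqrtDens ψ a' x) ^ 2 ∂(baseMeas b)) / 2

lemma sqrtDens_sq (ψ : ℝ → ℝ) (a x : ℝ) : sqrtDens ψ a x ^ 2 = Real.exp (a * x - ψ a) := by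
  unfold sqrtDens
  rw [← Real.exp_nat_mul]
  congr 1
  push_cast
  ring

lemma measurable_sqrtDens (ψ : ℝ → ℝ) (a : ℝ) : Measurable (sqrtDens ψ a) := by
  unfold sqrtDens
  fun_prop

lemma memLp_sqrtDens {b : ℝ → ℝ} (hb : ∀ x, 0 ≤ b x) (ψ : ℝ → ℝ) (a : ℝ)
    (h : IsProbabilityMeasure (expFam b ψ a)) : MemLp (sqrtDens ψ a) 2 (baseMeas b) := by
  rw [memLp_two_iff_integrable_sq (measurable_sqrtDens ψ a).aestronglyMeasurable]
  simp_rw [sqrtDens_sq]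
  exact integrable_density hb ψ a h

lemma integrable_sq_sub {b : ℝ → ℝ} (hb : ∀ x, 0 ≤ b x) (ψ : ℝ → ℝ) (a a' : ℝ)
    (h : IsProbabilityMeasure (expFam b ψ a)) (h' : IsProbabilityMeasure (expFam b ψ a')) :
    Integrable (fun x => (sqrtDens ψ a x - sqrtDens ψ a' x) ^ 2) (baseMeas b) :=
  ((memLp_sqrtDens hb ψ a h).sub (memLp_sqrtDens hb ψ a' h')).integrable_sq

lemma hell_nonneg (b ψ : ℝ → ℝ) (a a' : ℝ) : 0 ≤ hell b ψ a a' := by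
  unfold hell
  have := integral_nonneg (μ := baseMeas b)
    (f := fun x => (sqrtDens ψ a x - sqrtDens ψ a' x) ^ 2) (fun x => sq_nonneg _)
  linarith

lemma hell_triangle {b : ℝ → ℝ} (hb : ∀ x, 0 ≤ b x) (ψ : ℝ → ℝ) (a₁ a₂ a : ℝ)
    (h₁ : IsProbabilityMeasure (expFam b ψ a₁)) (h₂ : IsProbabilityMeasure (expFam b ψ a₂))
    (h : IsProbabilityMeasure (expFam b ψ a)) :
    hell b ψ a₁ a₂ / 2 ≤ hell b ψ a₁ a + hell b ψ a₂ a := by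
  have i1 := integrable_sq_sub hb ψ a₁ a h₁ h
  have i2 := integrable_sq_sub hb ψ a₂ a h₂ h
  have key : ∫ x, (sqrtDens ψ a₁ x - sqrtDens ψ a₂ x) ^ 2 ∂(baseMeas b) ≤
      ∫ x, (2 * (sqrtDens ψ a₁ x - sqrtDens ψ a x) ^ 2 +
        2 * (sqrtDens ψ a₂ x - sqrtDens ψ a x) ^ 2) ∂(baseMeas b) := by
    refine integral_mono (integrable_sq_sub hb ψ a₁ a₂ h₁ h₂)
      ((i1.const_mul 2).add (i2.const_mul 2)) fun x => ?_
    simp only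
    nlinarith [sq_nonneg (sqrtDens ψ a₁ x - sqrtDens ψ a x + (sqrtDens ψ a₂ x - sqrtDens ψ a x))]
  rw [integral_add (i1.const_mul 2) (i2.const_mul 2), integral_const_mul, integral_const_mul] at key
  unfold hell
  linarith

lemma hell_pos {b : ℝ → ℝ} (hb : ∀ x, 0 ≤ b x) (ψ : ℝ → ℝ) (a a' : ℝ)
    (h : IsProbabilityMeasure (expFam b ψ a)) (h' : IsProbabilityMeasure (expFam b ψ a'))
    (hne : expFam b ψ a ≠ expFam b ψ a') : 0 < hell b ψ a a' := by
  refine lt_of_le_of_ne (hell_nonneg b ψ a a') fun h0 => hne ?_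
  have h1 : ∫ x, (sqrtDens ψ a x - sqrtDens ψ a' x) ^ 2 ∂(baseMeas b) = 0 := by
    unfold hell at h0
    linarith
  rw [integral_eq_zero_iff_of_nonneg (fun x => sq_nonneg _) (integrable_sq_sub hb ψ a a' h h')]
    at h1
  rw [expFam_eq hb, expFam_eq hb]
  apply withDensity_congr_ae
  filter_upwards [h1] with x hx
  simp only [Pi.zero_apply, ne_eq, OfNat.ofNat_ne_zero, not_false_eq_true, pow_eq_zero_iff] at hx
  rw [← sqrtDens_sq, ← sqrtDens_sq, sub_eq_zero.1 hx]

/-- Square root of the likelihood ratio of the parameter `a'` against the parameter `a`. -/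
def sqrtRatio (ψ : ℝ → ℝ) (a a' x : ℝ) : ℝ :=
  Real.exp (((a' * x - ψ a') - (a * x - ψ a)) / 2)

lemma sqrtRatio_mul (ψ : ℝ → ℝ) (a a' x : ℝ) :
    Real.exp (a * x - ψ a) * sqrtRatio ψ a a' x = sqrtDens ψ a x * sqrtDens ψ a' x := by
  unfold sqrtRatio sqrtDens
  rw [← Real.exp_add, ← Real.exp_add]
  congr 1
  ring

lemma integrable_sqrtRatio {b : ℝ → ℝ} (hb : ∀ x, 0 ≤ b x) (ψ : ℝ → ℝ) (a a' : ℝ)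
    (h : IsProbabilityMeasure (expFam b ψ a)) (h' : IsProbabilityMeasure (expFam b ψ a')) :
    Integrable (sqrtRatio ψ a a') (expFam b ψ a) := by
  rw [integrable_expFam hb]
  simp_rw [sqrtRatio_mul]
  have hmem := memLp_sqrtDens hb ψ a' h'
  exact (memLp_sqrtDens hb ψ a h).integrable_mul hmem

/-- The Hellinger affinity `1 - hell` is at most `exp (-hell)`. -/
lemma integral_sqrtRatio_le {b : ℝ → ℝ} (hb : ∀ x, 0 ≤ b x) (ψ : ℝ → ℝ) (a a' : ℝ)
    (h : IsProbabilityMeasure (expFam b ψ a)) (h' : IsProbabilityMeasure (expFam b ψ a')) :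
    ∫ x, sqrtRatio ψ a a' x ∂(expFam b ψ a) ≤ Real.exp (-hell b ψ a a') := by
  have hmul : Integrable (fun x => sqrtDens ψ a x * sqrtDens ψ a' x) (baseMeas b) :=
    (memLp_sqrtDens hb ψ a h).integrable_mul (memLp_sqrtDens hb ψ a' h')
  have h1 : hell b ψ a a' = 1 - ∫ x, sqrtDens ψ a x * sqrtDens ψ a' x ∂(baseMeas b) := by
    unfold hell
    have e : ∀ x, (sqrtDens ψ a x - sqrtDens ψ a' x) ^ 2 =
        (Real.exp (a * x - ψ a) + Real.exp (a' * x - ψ a')) -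
          2 * (sqrtDens ψ a x * sqrtDens ψ a' x) := by
      intro x
      rw [← sqrtDens_sq, ← sqrtDens_sq]
      ring
    simp_rw [e]
    have hsum : Integrable (fun x => Real.exp (a * x - ψ a) + Real.exp (a' * x - ψ a'))
        (baseMeas b) := (integrable_density hb ψ a h).add (integrable_density hb ψ a' h')
    rw [integral_sub hsum (hmul.const_mul 2), integral_add (integrable_density hb ψ a h)
      (integrable_density hb ψ a' h'), integral_density hb ψ a h, integral_density hb ψ a' h',
      integral_const_mul]
    ring
  rw [integral_expFam hb]
  simp_rw [sqrtRatio_mul]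
  have := Real.add_one_le_exp (-hell b ψ a a')
  linarith

/-- Members of the family in the interior of the domain have a first moment. -/
lemma integrable_abs_expFam {b : ℝ → ℝ} (hb : ∀ x, 0 ≤ b x) (ψ : ℝ → ℝ) (A : Set ℝ)
    (hA : ∀ a ∈ A, IsProbabilityMeasure (expFam b ψ a)) (a : ℝ) (ha : a ∈ interior A) :
    Integrable (fun x => |x|) (expFam b ψ a) := by
  obtain ⟨r, hr, hball⟩ := Metric.isOpen_iff.1 isOpen_interior a ha
  set s := r / 2 with hs
  have hs0 : 0 < s := by positivity
  have hp : a + s ∈ A := by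
    apply interior_subset
    apply hball
    rw [Metric.mem_ball, Real.dist_eq, add_sub_cancel_left, abs_of_pos hs0]
    linarith
  have hq : a - s ∈ A := by
    apply interior_subset
    apply hball
    rw [Metric.mem_ball, Real.dist_eq, show a - s - a = -s by ring, abs_neg, abs_of_pos hs0]
    linarith
  rw [integrable_expFam hb]
  have i1 := (integrable_density hb ψ _ (hA _ hp)).const_mul (Real.exp (ψ (a + s) - ψ a) / s)
  have i2 := (integrable_density hb ψ _ (hA _ hq)).const_mul (Real.exp (ψ (a - s) - ψ a) / s)
  refine (i1.add i2).mono' (by fun_prop) (Eventually.of_forall fun x => ?_)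
  have e1 : Real.exp (ψ (a + s) - ψ a) / s * Real.exp ((a + s) * x - ψ (a + s)) =
      Real.exp (a * x - ψ a) * (Real.exp (s * x) / s) := by
    rw [div_mul_eq_mul_div, ← Real.exp_add, mul_div_assoc', ← Real.exp_add]
    congr 2
    ring
  have e2 : Real.exp (ψ (a - s) - ψ a) / s * Real.exp ((a - s) * x - ψ (a - s)) =
      Real.exp (a * x - ψ a) * (Real.exp (-(s * x)) / s) := by
    rw [div_mul_eq_mul_div, ← Real.exp_add, mul_div_assoc', ← Real.exp_add]
    congr 2
    ring
  simp only [Pi.add_apply]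
  rw [e1, e2, ← mul_add, norm_mul, Real.norm_of_nonneg (Real.exp_nonneg _),
    Real.norm_of_nonneg (abs_nonneg x)]
  refine mul_le_mul_of_nonneg_left ?_ (Real.exp_nonneg _)
  rw [← add_div, le_div_iff₀ hs0]
  have h1 := Real.add_one_le_exp (s * x)
  have h2 := Real.add_one_le_exp (-(s * x))
  have h3 := Real.exp_pos (s * x)
  have h4 := Real.exp_pos (-(s * x))
  rcases abs_cases x with ⟨h, _⟩ | ⟨h, _⟩ <;> rw [h] <;> nlinarith

end ExpFamily

/-! ### Divergence of assignments far from the truth -/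

section Combinatorics

/-- Confusion count: number of indices with true label `k` and proposed label `k'`. -/
def confusion {n g : ℕ} (zs z : Fin n → Fin g) (k k' : Fin g) : ℕ :=
  (Finset.univ.filter fun i => zs i = k ∧ z i = k').card

lemma confusion_cast {n g : ℕ} (zs z : Fin n → Fin g) (k k' : Fin g) :
    (confusion zs z k k' : ℝ) = ∑ i, if zs i = k ∧ z i = k' then (1 : ℝ) else 0 := by
  unfold confusion
  rw [Finset.sum_boole]

/-- Two true row classes `k₁ ≠ k₂` merged into the same class `k'` are both compared with the same
parameter on the column block `(l, l')`, so they cannot both fit. -/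
lemma confusion_block_le {n d g m : ℕ} (D : Fin g → Fin m → Fin g → Fin m → ℝ)
    (hD : ∀ k l k' l', 0 ≤ D k l k' l') (zs z : Fin n → Fin g) (ws w : Fin d → Fin m)
    {δ : ℝ} {k₁ k₂ k' : Fin g} {l l' : Fin m} (hk : k₁ ≠ k₂)
    (hδ : δ ≤ D k₁ l k' l' + D k₂ l k' l') (q : ℝ) (hq : 0 ≤ q)
    (h₁ : q ≤ confusion zs z k₁ k') (h₂ : q ≤ confusion zs z k₂ k') :
    q * confusion ws w l l' * δ ≤ ∑ i, ∑ j, D (zs i) (ws j) (z i) (w j) := by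
  have key : ∑ i, ∑ j, ((if zs i = k₁ ∧ z i = k' then (1 : ℝ) else 0) * D k₁ l k' l' +
      (if zs i = k₂ ∧ z i = k' then (1 : ℝ) else 0) * D k₂ l k' l') *
        (if ws j = l ∧ w j = l' then (1 : ℝ) else 0) ≤
      ∑ i, ∑ j, D (zs i) (ws j) (z i) (w j) := by
    refine Finset.sum_le_sum fun i _ => Finset.sum_le_sum fun j _ => ?_
    have h0 := hD (zs i) (ws j) (z i) (w j)
    by_cases hj : ws j = l ∧ w j = l'
    · obtain ⟨rfl, rfl⟩ := hj
      by_cases ha : zs i = k₁ ∧ z i = k'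
      · obtain ⟨rfl, rfl⟩ := ha
        simp [hk]
      · by_cases hb : zs i = k₂ ∧ z i = k'
        · obtain ⟨rfl, rfl⟩ := hb
          simp [Ne.symm hk]
        · simpa [ha, hb] using h0
    · simpa [hj] using h0
  rw [← Finset.sum_mul_sum, Finset.sum_add_distrib, ← Finset.sum_mul, ← Finset.sum_mul,
    ← confusion_cast, ← confusion_cast, ← confusion_cast] at key
  refine le_trans ?_ key
  have hB : (0 : ℝ) ≤ confusion ws w l l' := Nat.cast_nonneg _
  have e1 : q * D k₁ l k' l' ≤ confusion zs z k₁ k' * D k₁ l k' l' :=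
    mul_le_mul_of_nonneg_right h₁ (hD _ _ _ _)
  have e2 : q * D k₂ l k' l' ≤ confusion zs z k₂ k' * D k₂ l k' l' :=
    mul_le_mul_of_nonneg_right h₂ (hD _ _ _ _)
  have e3 : q * δ ≤ q * (D k₁ l k' l' + D k₂ l k' l') := mul_le_mul_of_nonneg_left hδ hq
  calc q * confusion ws w l l' * δ = (q * δ) * confusion ws w l l' := by ring
    _ ≤ _ := mul_le_mul_of_nonneg_right (by linarith) hB

lemma exists_confusion_ge {d m : ℕ} (ws w : Fin d → Fin m) (l : Fin m) :
    ∃ l', (catCount ws l : ℝ) / m ≤ confusion ws w l l' := by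
  have hm : (0 : ℝ) < m := by exact_mod_cast (Fin.pos l)
  by_contra! hcon
  have h1 : (catCount ws l : ℝ) = ∑ l', (confusion ws w l l' : ℝ) := by
    simp_rw [confusion_cast]
    rw [Finset.sum_comm]
    unfold catCount
    rw [← Finset.sum_boole]
    refine Finset.sum_congr rfl fun j _ => ?_
    by_cases h : ws j = l <;> simp [h]
  have : Nonempty (Fin m) := ⟨l⟩
  have h2 := Finset.sum_lt_sum_of_nonempty (Finset.univ_nonempty (α := Fin m))
    (fun l' _ => hcon l')
  rw [← h1] at h2
  simp only [Finset.sum_const, Finset.card_univ, Fintype.card_fin, nsmul_eq_mul] at h2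
  rw [mul_div_cancel₀ _ hm.ne'] at h2
  exact lt_irrefl _ h2

lemma hamSim_le_of_confusion {n g : ℕ} (zs z : Fin n → Fin g) (s : Equiv.Perm (Fin g)) (q : ℝ)
    (hq : 0 ≤ q) (h : ∀ k k', k' ≠ s k → (confusion zs z k k' : ℝ) ≤ q) :
    (hamSim z zs : ℝ) ≤ (g : ℝ) ^ 2 * q := by
  have h1 : hamSim z zs ≤ (Finset.univ.filter fun i => z i ≠ s (zs i)).card :=
    ciInf_le' (fun s : Equiv.Perm (Fin g) => (Finset.univ.filter fun i => z i ≠ s (zs i)).card) s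
  have h2 : ((Finset.univ.filter fun i => z i ≠ s (zs i)).card : ℝ) ≤ (g : ℝ) ^ 2 * q := by
    rw [Finset.card_eq_sum_card_fiberwise (f := fun i => (zs i, z i)) (t := Finset.univ)
      (fun _ _ => Finset.mem_univ _)]
    push_cast
    have : ∀ kk ∈ (Finset.univ : Finset (Fin g × Fin g)),
        (((Finset.univ.filter fun i => z i ≠ s (zs i)).filter
          fun i => (zs i, z i) = kk).card : ℝ) ≤ q := by
      rintro ⟨k, k'⟩ _
      by_cases hk : k' = s k
      · rw [Finset.filter_filter, Finset.filter_false_of_mem]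
        · simpa using hq
        · rintro i _ ⟨ha, hb⟩
          simp only [Prod.mk.injEq] at hb
          exact ha (by rw [hb.1, hb.2, hk])
      · refine le_trans ?_ (h k k' hk)
        unfold confusion
        norm_cast
        refine Finset.card_le_card fun i hi => ?_
        simp only [Finset.mem_filter, Prod.mk.injEq, Finset.mem_univ, true_and] at hi ⊢
        exact hi.2
    refine (Finset.sum_le_sum this).trans (le_of_eq ?_)
    simp [sq]
  exact le_trans (by exact_mod_cast h1) h2

/-- If the row labels are at distance more than `r n` from the truth, the total divergence is of
order at least `r n d`. Were it smaller, the dominant confusion entries of each true class would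
define a permutation of labels, up to which only few rows disagree. -/
lemma sum_ge_of_hamSim_lt {n d g m : ℕ} (D : Fin g → Fin m → Fin g → Fin m → ℝ)
    (hD : ∀ k l k' l', 0 ≤ D k l k' l') (zs z : Fin n → Fin g) (ws w : Fin d → Fin m)
    (hm : 0 < m) {δ c r : ℝ} (hδ : 0 ≤ δ) (hr : 0 ≤ r) (hc : 0 ≤ c) (hrc : 2 * r ≤ c)
    (hsep : ∀ k₁ k₂, k₁ ≠ k₂ → ∃ l, ∀ k' l', δ ≤ D k₁ l k' l' + D k₂ l k' l')
    (hz : ∀ k, c * (n : ℝ) / 2 ≤ catCount zs k) (hw : ∀ l, c * (d : ℝ) / 2 ≤ catCount ws l)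
    (hham : r * n < hamSim z zs) :
    c * δ / (2 * m * (g : ℝ) ^ 2) * (n * d * r) ≤ ∑ i, ∑ j, D (zs i) (ws j) (z i) (w j) := by
  by_contra! hlt
  have hn : 0 < n := by
    rcases Nat.eq_zero_or_pos n with h | h
    · subst h
      simp [hamSim] at hham
    · exact h
  have hg : 0 < g := Fin.pos (z ⟨0, hn⟩)
  have hgR : (1 : ℝ) ≤ g := by exact_mod_cast hg
  have hmR : (0 : ℝ) < m := by exact_mod_cast hm
  have hnR : (0 : ℝ) < n := by exact_mod_cast hn
  set q : ℝ := r * n / (g : ℝ) ^ 2 with hq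
  have hq0 : 0 ≤ q := by positivity
  -- no two true classes share a proposed class with multiplicity `q`
  have hmerge : ∀ k₁ k₂ k', k₁ ≠ k₂ → q ≤ confusion zs z k₁ k' → q ≤ confusion zs z k₂ k' →
      False := by
    intro k₁ k₂ k' hne h1 h2
    obtain ⟨l, hl⟩ := hsep k₁ k₂ hne
    obtain ⟨l', hl'⟩ := exists_confusion_ge ws w l
    have hblock := confusion_block_le D hD zs z ws w hne (hl k' l') q hq0 h1 h2
    have hB : c * d / 2 / m ≤ confusion ws w l l' :=
      le_trans (div_le_div_of_nonneg_right (hw l) hmR.le) hl'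
    have : c * δ / (2 * m * (g : ℝ) ^ 2) * (n * d * r) = q * (c * d / 2 / m) * δ := by
      rw [hq]
      field_simp
    have h3 : q * (c * d / 2 / m) * δ ≤ q * confusion ws w l l' * δ :=
      mul_le_mul_of_nonneg_right (mul_le_mul_of_nonneg_left hB hq0) hδ
    linarith
  choose s hs using fun k => exists_confusion_ge zs z k
  have hsq : ∀ k, q ≤ confusion zs z k (s k) := by
    intro k
    refine le_trans ?_ (le_trans (div_le_div_of_nonneg_right (hz k) (by positivity)) (hs k))
    rw [hq, div_le_div_iff₀ (by positivity) (by positivity)]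
    have : r * n ≤ c * n / 2 := by nlinarith
    have h2 : (g : ℝ) ≤ (g : ℝ) ^ 2 := by nlinarith
    have h3 : 0 ≤ c * n / 2 := by positivity
    exact mul_le_mul this h2 (by positivity) h3
  have hinj : Function.Injective s := by
    intro k₁ k₂ h
    by_contra hne
    exact hmerge k₁ k₂ (s k₁) hne (hsq k₁) (h ▸ hsq k₂)
  have hbij : Function.Bijective s := Finite.injective_iff_bijective.1 hinj
  have hfin := hamSim_le_of_confusion zs z (Equiv.ofBijective s hbij) q hq0 (by
    intro k k' hk
    obtain ⟨k₂, rfl⟩ := hbij.2 k'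
    have hne : k ≠ k₂ := by
      rintro rfl
      exact hk rfl
    by_contra! hcon
    exact hmerge k k₂ (s k₂) hne hcon.le (hsq k₂))
  have : (g : ℝ) ^ 2 * q = r * n := by
    rw [hq]
    field_simp
  linarith

end Combinatorics

/-! ### Discretisation of the parameter set -/

section Discretisation

lemma exists_net (C : Set ℝ) (hC : IsCompact C) :
    ∃ R : ℕ, 0 < R ∧ ∀ N : ℕ, 0 < N → ∃ S : Finset ℝ, (∀ s ∈ S, s ∈ C) ∧ S.card ≤ R * N ∧
      ∀ a ∈ C, ∃ s ∈ S, |a - s| ≤ 1 / N := by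
  classical
  obtain ⟨R₁, hR₁⟩ := hC.isBounded.exists_norm_le
  obtain ⟨R, hR⟩ := exists_nat_ge R₁
  refine ⟨2 * R + 1, by omega, fun N hN => ?_⟩
  have hNR : (0 : ℝ) < N := by exact_mod_cast hN
  -- one representative in `C` for every nonempty cell of side `1 / N`
  let f : ℤ → ℝ := fun j => if h : ∃ a ∈ C, ⌊a * N⌋ = j then h.choose else 0
  have hf : ∀ a ∈ C, f ⌊a * N⌋ ∈ C ∧ ⌊f ⌊a * N⌋ * N⌋ = ⌊a * N⌋ := by
    intro a ha
    have h : ∃ a' ∈ C, ⌊a' * N⌋ = ⌊a * N⌋ := ⟨a, ha, rfl⟩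
    simp only [f, dif_pos h]
    exact h.choose_spec
  let I : Finset ℤ := Finset.Icc (-((R * N : ℕ) : ℤ)) ((R * N : ℕ) : ℤ)
  refine ⟨(I.image f).filter (· ∈ C), fun s hs => (Finset.mem_filter.1 hs).2, ?_, ?_⟩
  · refine (Finset.card_filter_le _ _).trans (Finset.card_image_le.trans ?_)
    simp only [I, Int.card_Icc]
    have : 2 * (R * N) + 1 ≤ (2 * R + 1) * N := by nlinarith
    omega
  · intro a ha
    obtain ⟨h1, h2⟩ := hf a ha
    refine ⟨f ⌊a * N⌋, Finset.mem_filter.2 ⟨Finset.mem_image_of_mem _ ?_, h1⟩, ?_⟩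
    · have habs : |a| ≤ R := by
        have := hR₁ a ha
        rw [Real.norm_eq_abs] at this
        linarith
      obtain ⟨h3, h4⟩ := abs_le.1 habs
      simp only [I, Finset.mem_Icc]
      constructor
      · rw [Int.le_floor]
        push_cast
        nlinarith
      · have : (⌊a * N⌋ : ℝ) ≤ ((R * N : ℕ) : ℤ) := by
          refine (Int.floor_le _).trans ?_
          push_cast
          nlinarith
        exact_mod_cast this
    · have h3 := Int.abs_sub_lt_one_of_floor_eq_floor h2
      rw [le_div_iff₀ hNR]
      calc |a - f ⌊a * N⌋| * N = |a * N - f ⌊a * N⌋ * N| := by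
            rw [← sub_mul, abs_mul, abs_of_pos hNR]
        _ ≤ 1 := by rw [abs_sub_comm]; exact h3.le

lemma exists_lipschitz {ψ : ℝ → ℝ} {A C : Set ℝ} (hψ : ContDiffOn ℝ (⊤ : ℕ∞) ψ (interior A))
    (hC : IsCompact C) (hCA : C ⊆ interior A) :
    ∃ L : ℝ, 0 ≤ L ∧ ∀ a ∈ C, ∀ a' ∈ C, |ψ a - ψ a'| ≤ L * |a - a'| := by
  have h : LocallyLipschitzOn C ψ := by
    intro a ha
    have h1 : ContDiffAt ℝ 1 ψ a :=
      (hψ.contDiffAt (isOpen_interior.mem_nhds (hCA ha))).of_le (by exact_mod_cast le_top)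
    obtain ⟨K, t, ht, hK⟩ := h1.exists_lipschitzOnWith
    exact ⟨K, t, mem_nhdsWithin_of_mem_nhds ht, hK⟩
  obtain ⟨K, hK⟩ := h.exists_lipschitzOnWith_of_compact hC
  refine ⟨K, K.2, fun a ha a' ha' => ?_⟩
  simpa [Real.dist_eq] using hK.dist_le_mul a ha a' ha'

end Discretisation

/-! ### Probability bound for fixed `n` and `d` -/

section FiniteSample

variable {n d g m : ℕ}

/-- Sum, over the discretised connectivity parameters `T` and the assignments `F`, of the square
roots of the conditional likelihood ratios against the truth. -/
def ratioSum (ψ : ℝ → ℝ) (θs : Param g m) (zs : Fin n → Fin g) (ws : Fin d → Fin m)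
    (T : Finset (Fin g → Fin m → ℝ)) (F : Finset ((Fin n → Fin g) × (Fin d → Fin m)))
    (x : Fin n × Fin d → ℝ) : ℝ :=
  ∑ α ∈ T, ∑ zw ∈ F, ∏ p : Fin n × Fin d,
    sqrtRatio ψ (θs.2.2 (zs p.1) (ws p.2)) (α (zw.1 p.1) (zw.2 p.2)) (x p)

/-- Replacing the parameter by a point of a `1/(nd)`-net changes the log-likelihood by at most
`n + d + L`. -/
lemma prod_exp_le (hn : 0 < n) (hd : 0 < d) (ψ : ℝ → ℝ) (a as α x : Fin n × Fin d → ℝ) (L : ℝ)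
    (hx : ∑ p, |x p| ≤ n * d * (n + d)) (h₁ : ∀ p, |a p - α p| ≤ 1 / (n * d : ℕ))
    (h₂ : ∀ p, |ψ (a p) - ψ (α p)| ≤ L * (1 / (n * d : ℕ))) :
    ∏ p, Real.exp (a p * x p - ψ (a p)) ≤
      (∏ p, Real.exp (as p * x p - ψ (as p))) * Real.exp (n + d + L) *
        (∏ p, sqrtRatio ψ (as p) (α p) (x p)) ^ 2 := by
  have hnR : (0 : ℝ) < n := by exact_mod_cast hn
  have hdR : (0 : ℝ) < d := by exact_mod_cast hd
  unfold sqrtRatio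
  rw [← Real.exp_sum, ← Real.exp_sum, ← Real.exp_sum, ← Real.exp_nat_mul, ← Real.exp_add,
    ← Real.exp_add, Real.exp_le_exp]
  push_cast
  rw [← Finset.sum_div, mul_div_cancel₀ _ (two_ne_zero), Finset.sum_sub_distrib (f := fun p =>
    α p * x p - ψ (α p))]
  have key : ∀ p, a p * x p - ψ (a p) ≤
      (α p * x p - ψ (α p)) + (|x p| / (n * d) + L / (n * d)) := by
    intro p
    have e1 : (a p - α p) * x p ≤ 1 / (n * d) * |x p| := by
      refine (le_abs_self _).trans ?_
      rw [abs_mul]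
      refine mul_le_mul_of_nonneg_right ?_ (abs_nonneg _)
      simpa using h₁ p
    have e2 : -(ψ (a p) - ψ (α p)) ≤ L * (1 / (n * d)) := by
      refine (neg_le_abs _).trans ?_
      simpa using h₂ p
    have e3 : 1 / ((n : ℝ) * d) * |x p| = |x p| / (n * d) := by ring
    have e4 : L * (1 / ((n : ℝ) * d)) = L / (n * d) := by ring
    linarith
  have hsum := Finset.sum_le_sum fun p (_ : p ∈ (Finset.univ : Finset (Fin n × Fin d))) => key p
  rw [Finset.sum_add_distrib, Finset.sum_add_distrib, ← Finset.sum_div] at hsum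
  have e5 : (∑ p, |x p|) / (n * d) ≤ n + d := by
    rw [div_le_iff₀ (by positivity)]
    linarith
  have e6 : ∑ _p : Fin n × Fin d, L / ((n : ℝ) * d) = L := by
    simp only [Finset.sum_const, Finset.card_univ, Fintype.card_prod, Fintype.card_fin,
      nsmul_eq_mul]
    push_cast
    field_simp
  linarith

/-- On the event that the data are positive for `b` and have a controlled absolute sum, a large
contribution of the assignments in `F` forces `ratioSum` to be large. -/
lemma sqrt_le_ratioSum (hn : 0 < n) (hd : 0 < d) (b ψ : ℝ → ℝ) {c ε L : ℝ} (hc : 0 < c)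
    (hε : 0 < ε) (Θ : Set (Param g m)) (θs : Param g m) (hθs : θs ∈ Θ)
    (hΘ₁ : ∀ θ ∈ Θ, ∀ k, c ≤ θ.1 k ∧ θ.1 k ≤ 1) (hΘ₂ : ∀ θ ∈ Θ, ∀ l, c ≤ θ.2.1 l ∧ θ.2.1 l ≤ 1)
    (zs : Fin n → Fin g) (ws : Fin d → Fin m) (T : Finset (Fin g → Fin m → ℝ))
    (hT : ∀ θ ∈ Θ, ∃ α ∈ T, ∀ k l, |θ.2.2 k l - α k l| ≤ 1 / (n * d : ℕ) ∧
      |ψ (θ.2.2 k l) - ψ (α k l)| ≤ L * (1 / (n * d : ℕ)))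
    (F : Finset ((Fin n → Fin g) × (Fin d → Fin m))) (x : Fin n × Fin d → ℝ)
    (hb : ∀ p, 0 < b (x p)) (hx : ∑ p, |x p| ≤ n * d * (n + d))
    (hev : ε * completeLik b ψ θs zs ws x ≤
      ⨆ θ : Θ, ∑ zw ∈ F, completeLik b ψ (θ : Param g m) zw.1 zw.2 x) :
    Real.sqrt (ε * c ^ (n + d) * Real.exp (-(n + d + L))) ≤ ratioSum ψ θs zs ws T F x := by
  have hsr : ∀ a a' y, 0 ≤ sqrtRatio ψ a a' y := fun a a' y => (Real.exp_pos _).le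
  set W := ratioSum ψ θs zs ws T F x with hW
  have hW0 : 0 ≤ W := Finset.sum_nonneg fun α _ => Finset.sum_nonneg fun zw _ =>
    Finset.prod_nonneg fun p _ => hsr _ _ _
  set B := ∏ p, b (x p) with hB
  have hB0 : 0 < B := Finset.prod_pos fun p _ => hb p
  set E := ∏ p : Fin n × Fin d, Real.exp (θs.2.2 (zs p.1) (ws p.2) * x p -
    ψ (θs.2.2 (zs p.1) (ws p.2))) with hE
  have hE0 : 0 < E := Finset.prod_pos fun p _ => Real.exp_pos _
  have hsup : ⨆ θ : Θ, ∑ zw ∈ F, completeLik b ψ (θ : Param g m) zw.1 zw.2 x ≤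
      B * E * Real.exp (n + d + L) * W ^ 2 := by
    have : Nonempty Θ := ⟨⟨θs, hθs⟩⟩
    refine ciSup_le fun θ => ?_
    obtain ⟨α, hαT, hα⟩ := hT θ θ.2
    have h1 : ∀ zw ∈ F, completeLik b ψ (θ : Param g m) zw.1 zw.2 x ≤
        B * E * Real.exp (n + d + L) * (∏ p : Fin n × Fin d,
          sqrtRatio ψ (θs.2.2 (zs p.1) (ws p.2)) (α (zw.1 p.1) (zw.2 p.2)) (x p)) ^ 2 := by
      intro zw _
      unfold completeLik
      have p1 : ∏ i, (θ : Param g m).1 (zw.1 i) ≤ 1 :=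
        Finset.prod_le_one (fun i _ => hc.le.trans (hΘ₁ θ θ.2 _).1) fun i _ => (hΘ₁ θ θ.2 _).2
      have p2 : ∏ j, (θ : Param g m).2.1 (zw.2 j) ≤ 1 :=
        Finset.prod_le_one (fun i _ => hc.le.trans (hΘ₂ θ θ.2 _).1) fun i _ => (hΘ₂ θ θ.2 _).2
      have p3 : 0 ≤ ∏ j, (θ : Param g m).2.1 (zw.2 j) :=
        Finset.prod_nonneg fun j _ => hc.le.trans (hΘ₂ θ θ.2 _).1
      have hle := prod_exp_le hn hd ψ
        (fun p => (θ : Param g m).2.2 (zw.1 p.1) (zw.2 p.2))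
        (fun p => θs.2.2 (zs p.1) (ws p.2)) (fun p => α (zw.1 p.1) (zw.2 p.2)) x L hx
        (fun p => (hα _ _).1) (fun p => (hα _ _).2)
      rw [Finset.prod_mul_distrib]
      have p4 : 0 ≤ B * ∏ p : Fin n × Fin d, Real.exp ((θ : Param g m).2.2 (zw.1 p.1) (zw.2 p.2) *
          x p - ψ ((θ : Param g m).2.2 (zw.1 p.1) (zw.2 p.2))) :=
        mul_nonneg hB0.le (Finset.prod_nonneg fun p _ => (Real.exp_pos _).le)
      refine (mul_le_of_le_one_left p4 (mul_le_one₀ p1 p3 p2)).trans ?_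
      refine (mul_le_mul_of_nonneg_left hle hB0.le).trans (le_of_eq ?_)
      rw [hE]
      ring
    refine (Finset.sum_le_sum h1).trans ?_
    rw [← Finset.mul_sum]
    refine mul_le_mul_of_nonneg_left ?_ (by positivity)
    refine (Finset.sum_sq_le_sq_sum_of_nonneg fun zw _ =>
      Finset.prod_nonneg fun p _ => hsr _ _ _).trans ?_
    have hWα : ∑ zw ∈ F, ∏ p : Fin n × Fin d,
        sqrtRatio ψ (θs.2.2 (zs p.1) (ws p.2)) (α (zw.1 p.1) (zw.2 p.2)) (x p) ≤ W :=
      Finset.single_le_sum (f := fun α : Fin g → Fin m → ℝ => ∑ zw ∈ F, ∏ p : Fin n × Fin d,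
        sqrtRatio ψ (θs.2.2 (zs p.1) (ws p.2)) (α (zw.1 p.1) (zw.2 p.2)) (x p))
        (fun α _ => Finset.sum_nonneg fun zw _ => Finset.prod_nonneg fun p _ => hsr _ _ _) hαT
    exact pow_le_pow_left₀ (Finset.sum_nonneg fun zw _ =>
      Finset.prod_nonneg fun p _ => hsr _ _ _) hWα 2
  have hlik : c ^ (n + d) * (B * E) ≤ completeLik b ψ θs zs ws x := by
    unfold completeLik
    rw [Finset.prod_mul_distrib, pow_add]
    have p1 : c ^ n ≤ ∏ i, θs.1 (zs i) := by
      have := Finset.prod_le_prod (s := (Finset.univ : Finset (Fin n))) (f := fun _ => c)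
        (g := fun i => θs.1 (zs i)) (fun i _ => hc.le) fun i _ => (hΘ₁ θs hθs _).1
      simpa using this
    have p2 : c ^ d ≤ ∏ j, θs.2.1 (ws j) := by
      have := Finset.prod_le_prod (s := (Finset.univ : Finset (Fin d))) (f := fun _ => c)
        (g := fun j => θs.2.1 (ws j)) (fun i _ => hc.le) fun i _ => (hΘ₂ θs hθs _).1
      simpa using this
    refine mul_le_mul_of_nonneg_right ?_ (by positivity)
    exact mul_le_mul p1 p2 (by positivity) (le_trans (by positivity) p1)
  have hfin : ε * c ^ (n + d) * (B * E) ≤ (Real.exp (n + d + L) * W ^ 2) * (B * E) := by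
    have := mul_le_mul_of_nonneg_left hlik hε.le
    calc ε * c ^ (n + d) * (B * E) = ε * (c ^ (n + d) * (B * E)) := by ring
      _ ≤ B * E * Real.exp (n + d + L) * W ^ 2 := this.trans (hev.trans hsup)
      _ = _ := by ring
  have hfin' := le_of_mul_le_mul_right hfin (by positivity)
  rw [Real.sqrt_le_iff]
  refine ⟨hW0, ?_⟩
  rw [Real.exp_neg, ← div_eq_mul_inv, div_le_iff₀ (Real.exp_pos _)]
  linarith

/-- Markov's inequality for `ratioSum` and for the sum of the absolute values of the data. -/
lemma prob_le (hn : 0 < n) (hd : 0 < d) (b ψ : ℝ → ℝ) (hb : ∀ x, 0 ≤ b x) {c ε L M H : ℝ}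
    (hc : 0 < c) (hε : 0 < ε) (Θ : Set (Param g m)) (θs : Param g m) (hθs : θs ∈ Θ)
    (hΘ₁ : ∀ θ ∈ Θ, ∀ k, c ≤ θ.1 k ∧ θ.1 k ≤ 1) (hΘ₂ : ∀ θ ∈ Θ, ∀ l, c ≤ θ.2.1 l ∧ θ.2.1 l ≤ 1)
    (zs : Fin n → Fin g) (ws : Fin d → Fin m) (T : Finset (Fin g → Fin m → ℝ))
    (hT : ∀ θ ∈ Θ, ∃ α ∈ T, ∀ k l, |θ.2.2 k l - α k l| ≤ 1 / (n * d : ℕ) ∧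
      |ψ (θ.2.2 k l) - ψ (α k l)| ≤ L * (1 / (n * d : ℕ)))
    (hTprob : ∀ α ∈ T, ∀ k l, IsProbabilityMeasure (expFam b ψ (α k l)))
    (hprob : ∀ k l, IsProbabilityMeasure (expFam b ψ (θs.2.2 k l)))
    (hmom : ∀ k l, Integrable (fun x => |x|) (expFam b ψ (θs.2.2 k l)))
    (hM : ∀ k l, ∫ x, |x| ∂(expFam b ψ (θs.2.2 k l)) ≤ M)
    (F : Finset ((Fin n → Fin g) × (Fin d → Fin m)))
    (hH : ∀ α ∈ T, ∀ zw ∈ F,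
      H ≤ ∑ i, ∑ j, hell b ψ (θs.2.2 (zs i) (ws j)) (α (zw.1 i) (zw.2 j))) :
    (Measure.pi fun p : Fin n × Fin d => expFam b ψ (θs.2.2 (zs p.1) (ws p.2)))
      {x | ε * completeLik b ψ θs zs ws x ≤
        ⨆ θ : Θ, ∑ zw ∈ F, completeLik b ψ (θ : Param g m) zw.1 zw.2 x} ≤
      ENNReal.ofReal (M / (n + d) + T.card * F.card * Real.exp (-H) /
        Real.sqrt (ε * c ^ (n + d) * Real.exp (-(n + d + L)))) := by
  have hnR : (0 : ℝ) < n := by exact_mod_cast hn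
  have hdR : (0 : ℝ) < d := by exact_mod_cast hd
  set μ := Measure.pi fun p : Fin n × Fin d => expFam b ψ (θs.2.2 (zs p.1) (ws p.2)) with hμ
  set v := Real.sqrt (ε * c ^ (n + d) * Real.exp (-(n + d + L))) with hv
  have hv0 : 0 < v := Real.sqrt_pos.2 (by positivity)
  set A₁ : Set (Fin n × Fin d → ℝ) := {x | (n : ℝ) * d * (n + d) ≤ ∑ p, |x p|}
  set A₂ : Set (Fin n × Fin d → ℝ) := {x | v ≤ ratioSum ψ θs zs ws T F x}
  have hae : ∀ᵐ x ∂μ, ∀ p, 0 < b (x p) := by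
    rw [ae_all_iff]
    intro p
    exact (Measure.tendsto_eval_ae_ae (i := p)
      (μ := fun p : Fin n × Fin d => expFam b ψ (θs.2.2 (zs p.1) (ws p.2)))).eventually
      (expFam_ae_pos hb ψ _)
  have hsub : μ {x | ε * completeLik b ψ θs zs ws x ≤
      ⨆ θ : Θ, ∑ zw ∈ F, completeLik b ψ (θ : Param g m) zw.1 zw.2 x} ≤ μ (A₁ ∪ A₂) := by
    refine measure_mono_ae ?_
    filter_upwards [hae] with x hx hev
    by_cases h1 : (n : ℝ) * d * (n + d) ≤ ∑ p, |x p|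
    · exact Or.inl h1
    · exact Or.inr (sqrt_le_ratioSum hn hd b ψ hc hε Θ θs hθs hΘ₁ hΘ₂ zs ws T hT F x hx
        (not_le.1 h1).le hev)
  have hA₁ : μ.real A₁ ≤ M / (n + d) := by
    have hi : ∀ p ∈ (Finset.univ : Finset (Fin n × Fin d)),
        Integrable (fun x : Fin n × Fin d → ℝ => |x p|) μ := fun p _ =>
      integrable_comp_eval (i := p)
        (μ := fun p : Fin n × Fin d => expFam b ψ (θs.2.2 (zs p.1) (ws p.2)))
        (f := fun y : ℝ => |y|) (hmom _ _)
    have h1 := mul_meas_ge_le_integral_of_nonneg (μ := μ)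
      (f := fun x : Fin n × Fin d → ℝ => ∑ p, |x p|)
      (Eventually.of_forall fun x => Finset.sum_nonneg fun p _ => abs_nonneg _)
      (integrable_finsetSum _ hi) ((n : ℝ) * d * (n + d))
    rw [integral_finsetSum _ hi] at h1
    have h2 : ∑ p : Fin n × Fin d, ∫ x, |x p| ∂μ ≤ ∑ _p : Fin n × Fin d, M := by
      refine Finset.sum_le_sum fun p _ => ?_
      rw [hμ, integral_comp_eval (i := p)
        (μ := fun p : Fin n × Fin d => expFam b ψ (θs.2.2 (zs p.1) (ws p.2)))
        (f := fun y : ℝ => |y|) (by fun_prop)]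
      exact hM _ _
    simp only [Finset.sum_const, Finset.card_univ, Fintype.card_prod, Fintype.card_fin,
      nsmul_eq_mul, Nat.cast_mul] at h2
    rw [le_div_iff₀ (by positivity)]
    have h3 : ((n : ℝ) * d) * (μ.real A₁ * (n + d)) ≤ (n * d) * M := by
      calc ((n : ℝ) * d) * (μ.real A₁ * (n + d)) = n * d * (n + d) * μ.real A₁ := by ring
        _ ≤ _ := h1.trans h2
    exact le_of_mul_le_mul_left h3 (by positivity)
  have hA₂ : μ.real A₂ ≤ T.card * F.card * Real.exp (-H) / v := by
    have hi : ∀ α ∈ T, ∀ zw ∈ F, Integrable (fun x : Fin n × Fin d → ℝ => ∏ p : Fin n × Fin d,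
        sqrtRatio ψ (θs.2.2 (zs p.1) (ws p.2)) (α (zw.1 p.1) (zw.2 p.2)) (x p)) μ :=
      fun α hα zw _ => Integrable.fintype_prod
        (f := fun p : Fin n × Fin d => sqrtRatio ψ (θs.2.2 (zs p.1) (ws p.2))
          (α (zw.1 p.1) (zw.2 p.2)))
        (fun p => integrable_sqrtRatio hb ψ _ _ (hprob _ _) (hTprob α hα _ _))
    have hi' : ∀ α ∈ T, Integrable (fun x : Fin n × Fin d → ℝ => ∑ zw ∈ F,
        ∏ p : Fin n × Fin d,
        sqrtRatio ψ (θs.2.2 (zs p.1) (ws p.2)) (α (zw.1 p.1) (zw.2 p.2)) (x p)) μ :=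
      fun α hα => integrable_finsetSum _ (hi α hα)
    have h1 := mul_meas_ge_le_integral_of_nonneg (μ := μ)
      (f := ratioSum ψ θs zs ws T F)
      (Eventually.of_forall fun x => Finset.sum_nonneg fun α _ => Finset.sum_nonneg fun zw _ =>
        Finset.prod_nonneg fun p _ => (Real.exp_pos _).le)
      (integrable_finsetSum _ hi') v
    have h2 : ∫ x, ratioSum ψ θs zs ws T F x ∂μ ≤ T.card * F.card * Real.exp (-H) := by
      unfold ratioSum
      rw [integral_finsetSum _ hi']
      have h3 : ∀ α ∈ T, ∫ x : Fin n × Fin d → ℝ, ∑ zw ∈ F, ∏ p : Fin n × Fin d,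
          sqrtRatio ψ (θs.2.2 (zs p.1) (ws p.2)) (α (zw.1 p.1) (zw.2 p.2)) (x p) ∂μ ≤
          F.card * Real.exp (-H) := by
        intro α hα
        rw [integral_finsetSum _ (hi α hα), ← nsmul_eq_mul]
        refine Finset.sum_le_card_nsmul _ _ _ fun zw hzw => ?_
        rw [hμ, integral_fintype_prod_eq_prod (fun p : Fin n × Fin d =>
          sqrtRatio ψ (θs.2.2 (zs p.1) (ws p.2)) (α (zw.1 p.1) (zw.2 p.2)))]
        refine (Finset.prod_le_prod (fun p _ => integral_nonneg fun y => (Real.exp_pos _).le)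
          (fun p _ => integral_sqrtRatio_le hb ψ _ _ (hprob _ _) (hTprob α hα _ _))).trans ?_
        rw [← Real.exp_sum, Real.exp_le_exp, Finset.sum_neg_distrib, neg_le_neg_iff,
          Fintype.sum_prod_type]
        exact hH α hα zw hzw
      refine (Finset.sum_le_card_nsmul _ _ _ h3).trans (le_of_eq ?_)
      rw [nsmul_eq_mul, mul_assoc]
    rw [le_div_iff₀ hv0, mul_comm]
    exact h1.trans h2
  refine hsub.trans ((measure_union_le _ _).trans ?_)
  rw [← ofReal_measureReal (measure_ne_top μ A₁), ← ofReal_measureReal (measure_ne_top μ A₂),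
    ← ENNReal.ofReal_add measureReal_nonneg measureReal_nonneg]
  exact ENNReal.ofReal_le_ofReal (add_le_add hA₁ hA₂)

end FiniteSample

/-! ### Separation constant and asymptotic comparison -/

section Asymptotics

/-- Distinct true parameters are uniformly separated: no third parameter is close to both. -/
lemma exists_separation {b : ℝ → ℝ} (hb : ∀ x, 0 ≤ b x) (ψ : ℝ → ℝ) (A : Set ℝ)
    (hA : ∀ a ∈ A, IsProbabilityMeasure (expFam b ψ a)) (hinj : Set.InjOn (expFam b ψ) A)
    {g m : ℕ} (α : Fin g → Fin m → ℝ) (hα : ∀ k l, α k l ∈ A) :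
    ∃ δ : ℝ, 0 < δ ∧ ∀ k₁ l₁ k₂ l₂, α k₁ l₁ ≠ α k₂ l₂ → ∀ a ∈ A,
      δ ≤ hell b ψ (α k₁ l₁) a + hell b ψ (α k₂ l₂) a := by
  classical
  let f : (Fin g × Fin m) × (Fin g × Fin m) → ℝ := fun q =>
    if α q.1.1 q.1.2 = α q.2.1 q.2.2 then 1 else hell b ψ (α q.1.1 q.1.2) (α q.2.1 q.2.2) / 2
  have hf : ∀ q, 0 < f q := by
    intro q
    simp only [f]
    split_ifs with h
    · exact one_pos
    · have := hell_pos hb ψ _ _ (hA _ (hα q.1.1 q.1.2)) (hA _ (hα q.2.1 q.2.2))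
        (fun he => h (hinj (hα _ _) (hα _ _) he))
      linarith
  have hmin : ∃ δ : ℝ, 0 < δ ∧ ∀ q, δ ≤ f q := by
    cases isEmpty_or_nonempty ((Fin g × Fin m) × (Fin g × Fin m)) with
    | inl h => exact ⟨1, one_pos, fun q => h.elim q⟩
    | inr h =>
      obtain ⟨q₀, hq₀⟩ := Finite.exists_min f
      exact ⟨f q₀, hf q₀, hq₀⟩
  obtain ⟨δ, hδ, hle⟩ := hmin
  refine ⟨δ, hδ, fun k₁ l₁ k₂ l₂ hne a ha => ?_⟩
  have h1 := hle ((k₁, l₁), (k₂, l₂))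
  simp only [f, if_neg hne] at h1
  exact h1.trans (hell_triangle hb ψ _ _ _ (hA _ (hα _ _)) (hA _ (hα _ _)) (hA _ ha))

/-- The entropy terms are `exp (O(n + d))`, hence beaten by the divergence `H`. -/
lemma exponential_bound {n d g m R Tc Fc : ℕ} {ε c L H : ℝ} (hε : 0 < ε) (hc : 0 < c)
    (hT : Tc ≤ (R * (n * d)) ^ (m * g)) (hF : Fc ≤ g ^ n * m ^ d)
    (hH : (|(m : ℝ) * g + (g + m) + (1 - Real.log c) / 2| + 1) * ((n : ℝ) + d) ≤ H) :
    (Tc : ℝ) * Fc * Real.exp (-H) /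
        Real.sqrt (ε * c ^ (n + d) * Real.exp (-((n : ℝ) + d + L))) ≤
      (R : ℝ) ^ (m * g) * Real.exp (L / 2) / Real.sqrt ε * Real.exp (-((n : ℝ) + d)) := by
  set s : ℝ := (n : ℝ) + d with hs
  have hs0 : 0 ≤ s := by positivity
  have hexp : ∀ k : ℕ, (k : ℝ) ≤ Real.exp k := fun k => by
    linarith [Real.add_one_le_exp (k : ℝ)]
  have hT' : (Tc : ℝ) ≤ (R : ℝ) ^ (m * g) * Real.exp (m * g * s) := by
    have h1 : (Tc : ℝ) ≤ ((R : ℝ) * (n * d)) ^ (m * g) := by exact_mod_cast hT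
    refine h1.trans ?_
    rw [mul_pow]
    refine mul_le_mul_of_nonneg_left ?_ (by positivity)
    have h2 : (n : ℝ) * d ≤ Real.exp s := by
      rw [hs, Real.exp_add]
      exact mul_le_mul (hexp n) (hexp d) (by positivity) (Real.exp_pos _).le
    calc ((n : ℝ) * d) ^ (m * g) ≤ Real.exp s ^ (m * g) := by gcongr
      _ = Real.exp (m * g * s) := by
        rw [← Real.exp_nat_mul]
        push_cast
        rfl
  have hF' : (Fc : ℝ) ≤ Real.exp ((g + m) * s) := by
    have h1 : (Fc : ℝ) ≤ (g : ℝ) ^ n * (m : ℝ) ^ d := by exact_mod_cast hF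
    refine h1.trans ?_
    calc (g : ℝ) ^ n * (m : ℝ) ^ d ≤ Real.exp g ^ n * Real.exp m ^ d := by
          gcongr
          · exact hexp g
          · exact hexp m
      _ = Real.exp (n * g + d * m) := by
        rw [← Real.exp_nat_mul, ← Real.exp_nat_mul, ← Real.exp_add]
      _ ≤ Real.exp ((g + m) * s) := by
        rw [Real.exp_le_exp, hs]
        have a1 : (0 : ℝ) ≤ g * d := by positivity
        have a2 : (0 : ℝ) ≤ m * n := by positivity
        nlinarith
  have hv : Real.sqrt (ε * c ^ (n + d) * Real.exp (-(s + L))) =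
      Real.sqrt ε * Real.exp ((s * Real.log c - (s + L)) / 2) := by
    have h1 : c ^ (n + d) = Real.exp (s * Real.log c) := by
      rw [mul_comm, Real.exp_mul, Real.exp_log hc, hs, ← Nat.cast_add, Real.rpow_natCast]
    rw [h1, mul_assoc, ← Real.exp_add, Real.sqrt_mul hε.le, ← sub_eq_add_neg, Real.exp_half]
  rw [hv]
  have hε' : 0 < Real.sqrt ε := Real.sqrt_pos.2 hε
  rw [div_le_iff₀ (by positivity)]
  have hκ : ((m : ℝ) * g + (g + m) + (1 - Real.log c) / 2) * s ≤
      |(m : ℝ) * g + (g + m) + (1 - Real.log c) / 2| * s :=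
    mul_le_mul_of_nonneg_right (le_abs_self _) hs0
  calc (Tc : ℝ) * Fc * Real.exp (-H) ≤
        ((R : ℝ) ^ (m * g) * Real.exp (m * g * s)) * Real.exp ((g + m) * s) * Real.exp (-H) := by
        gcongr
    _ = (R : ℝ) ^ (m * g) * Real.exp (m * g * s + (g + m) * s + -H) := by
        rw [Real.exp_add, Real.exp_add]
        ring
    _ ≤ (R : ℝ) ^ (m * g) * Real.exp (L / 2 + -s + (s * Real.log c - (s + L)) / 2) := by
        refine mul_le_mul_of_nonneg_left ?_ (by positivity)
        rw [Real.exp_le_exp]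
        nlinarith
    _ = _ := by
        rw [Real.exp_add, Real.exp_add]
        field_simp

end Asymptotics

/-- **Proposition (contribution of global assignments).**  In the LBM under H1–H4, with
`log(d)/n → 0`, `log(n)/d → 0` and `t_{nd} ↓ 0` such that
`t_{nd} ≫ max((n+d)/(nd), log(nd)/√(nd))`, conditionally on `Ω₁` (the true assignments are
`c/2`-regular) and for `n, d` large enough that `2√(2nd) t_{nd} ≥ gm`,
`sup_{θ∈Θ} Σ_{(z,w) ∉ S(z*,w*,t_{nd})} p(z,w,x;θ) = o_P(p(z*,w*,x;θ*))`. -/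
theorem stmt_11 {g m : ℕ} (hg : 0 < g) (hm : 0 < m)
    (b ψ : ℝ → ℝ) (Adom : Set ℝ)
    (hb : ∀ x, 0 ≤ b x)
    (hψ : ContDiffOn ℝ (⊤ : ℕ∞) ψ (interior Adom))
    (hnorm : ∀ a ∈ Adom, IsProbabilityMeasure (expFam b ψ a))
    (c : ℝ) (hc : 0 < c) (Cα : Set ℝ) (hCα : IsCompact Cα) (hCαA : Cα ⊆ interior Adom)
    -- H1: the parameter space
    (Θ : Set (Param g m))
    (hΘ : ∀ θ ∈ Θ, (∀ k, θ.1 k ∈ Set.Icc c (1 - c)) ∧ (∑ k, θ.1 k) = 1 ∧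
      (∀ l, θ.2.1 l ∈ Set.Icc c (1 - c)) ∧ (∑ l, θ.2.1 l) = 1 ∧ ∀ k l, θ.2.2 k l ∈ Cα)
    -- H2: the true parameter
    (θs : Param g m) (hθs : θs ∈ Θ)
    -- H3
    (hinj : Set.InjOn (expFam b ψ) Adom)
    -- H4
    (hrowsdist : ∀ k k', (∀ l, θs.2.2 k l = θs.2.2 k' l) → k = k')
    (hcolsdist : ∀ l l', (∀ k, θs.2.2 k l = θs.2.2 k l') → l = l')
    -- asymptotic regime
    (n d : ℕ → ℕ) (hn : Tendsto n atTop atTop) (hd : Tendsto d atTop atTop)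
    (hlogd : Tendsto (fun τ => Real.log (d τ) / (n τ : ℝ)) atTop (𝓝 0))
    (hlogn : Tendsto (fun τ => Real.log (n τ) / (d τ : ℝ)) atTop (𝓝 0))
    -- the radius sequence `t_{nd}`
    (t : ℕ → ℝ) (htpos : ∀ τ, 0 < t τ) (htmono : Antitone t)
    (ht0 : Tendsto t atTop (𝓝 0))
    (ht1 : Tendsto (fun τ => (((n τ : ℝ) + (d τ : ℝ)) / ((n τ : ℝ) * (d τ : ℝ))) / t τ)
      atTop (𝓝 0))
    (ht2 : Tendsto (fun τ =>
      (Real.log ((n τ : ℝ) * (d τ : ℝ)) / Real.sqrt ((n τ : ℝ) * (d τ : ℝ))) / t τ)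
      atTop (𝓝 0))
    -- `n, d` large enough: `2√(2nd) t_{nd} ≥ gm`
    (htlarge : ∀ᶠ τ in atTop,
      (g : ℝ) * (m : ℝ) ≤ 2 * Real.sqrt (2 * ((n τ : ℝ) * (d τ : ℝ))) * t τ)
    -- conditioning on `Ω₁`: deterministic `c/2`-regular true assignments
    (zs : ∀ τ : ℕ, Fin (n τ) → Fin g) (ws : ∀ τ : ℕ, Fin (d τ) → Fin m)
    (hregz : ∀ τ k, c * (n τ : ℝ) / 2 ≤ (catCount (zs τ) k : ℝ))
    (hregw : ∀ τ l, c * (d τ : ℝ) / 2 ≤ (catCount (ws τ) l : ℝ))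
    -- the observations, with the conditional LBM law given `(z*,w*)`
    {Ω : Type*} [MeasurableSpace Ω] (P : Measure Ω) [IsProbabilityMeasure P]
    (X : ∀ τ : ℕ, Ω → Fin (n τ) × Fin (d τ) → ℝ)
    (hXmeas : ∀ τ, Measurable (X τ))
    (hXlaw : ∀ τ, P.map (X τ) = Measure.pi fun p : Fin (n τ) × Fin (d τ) =>
      expFam b ψ (θs.2.2 (zs τ p.1) (ws τ p.2))) :
    ∀ ε : ℝ, 0 < ε →
      Tendsto (fun τ => P {ω |
          ε * completeLik b ψ θs (zs τ) (ws τ) (X τ ω) ≤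
            ⨆ θ : Θ, ∑ zw : (Fin (n τ) → Fin g) × (Fin (d τ) → Fin m),
              Set.indicator
                {zw : (Fin (n τ) → Fin g) × (Fin (d τ) → Fin m) |
                  ¬ ((hamSim zw.1 (zs τ) : ℝ) ≤ t τ * (n τ : ℝ) ∧
                     (hamSim zw.2 (ws τ) : ℝ) ≤ t τ * (d τ : ℝ))}
                (fun zw => completeLik b ψ (θ : Param g m) zw.1 zw.2 (X τ ω)) zw})
        atTop (𝓝 0) := by
  intro ε hε
  classical
  have hCA : ∀ a ∈ Cα, a ∈ Adom := fun a ha => interior_subset (hCαA ha)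
  have hαs : ∀ k l, θs.2.2 k l ∈ Cα := (hΘ θs hθs).2.2.2.2
  have hΘ₁ : ∀ θ ∈ Θ, ∀ k, c ≤ θ.1 k ∧ θ.1 k ≤ 1 := fun θ hθ k =>
    ⟨((hΘ θ hθ).1 k).1, by linarith [((hΘ θ hθ).1 k).2]⟩
  have hΘ₂ : ∀ θ ∈ Θ, ∀ l, c ≤ θ.2.1 l ∧ θ.2.1 l ≤ 1 := fun θ hθ l =>
    ⟨((hΘ θ hθ).2.2.1 l).1, by linarith [((hΘ θ hθ).2.2.1 l).2]⟩
  have hprob : ∀ k l, IsProbabilityMeasure (expFam b ψ (θs.2.2 k l)) :=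
    fun k l => hnorm _ (hCA _ (hαs k l))
  obtain ⟨R, hR, hnet⟩ := exists_net Cα hCα
  obtain ⟨L, hL, hLip⟩ := exists_lipschitz hψ hCα hCαA
  obtain ⟨δ, hδ, hsep⟩ := exists_separation hb ψ Adom hnorm hinj (fun k l => θs.2.2 k l)
    (fun k l => hCA _ (hαs k l))
  have hmom : ∀ k l, Integrable (fun x => |x|) (expFam b ψ (θs.2.2 k l)) := fun k l =>
    integrable_abs_expFam hb ψ Adom hnorm _ (hCαA (hαs k l))
  set M : ℝ := ∑ k, ∑ l, ∫ x, |x| ∂(expFam b ψ (θs.2.2 k l)) with hMdef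
  have hM0 : ∀ k l, 0 ≤ ∫ x, |x| ∂(expFam b ψ (θs.2.2 k l)) := fun k l =>
    integral_nonneg fun x => abs_nonneg x
  have hM : ∀ k l, ∫ x, |x| ∂(expFam b ψ (θs.2.2 k l)) ≤ M := fun k l =>
    (Finset.single_le_sum (f := fun l => ∫ x, |x| ∂(expFam b ψ (θs.2.2 k l)))
      (fun l _ => hM0 k l) (Finset.mem_univ l)).trans
    (Finset.single_le_sum (f := fun k => ∑ l, ∫ x, |x| ∂(expFam b ψ (θs.2.2 k l)))
      (fun k _ => Finset.sum_nonneg fun l _ => hM0 k l) (Finset.mem_univ k))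
  have hgR : (0 : ℝ) < g := by exact_mod_cast hg
  have hmR : (0 : ℝ) < m := by exact_mod_cast hm
  set C : ℝ := min (c * δ / (2 * m * (g : ℝ) ^ 2)) (c * δ / (2 * g * (m : ℝ) ^ 2)) with hC
  have hC0 : 0 < C := lt_min (by positivity) (by positivity)
  -- exponential cost of the net, of the number of assignments and of the class proportions
  set κ : ℝ := m * g + (g + m) + (1 - Real.log c) / 2 with hκ
  set K : ℝ := (R : ℝ) ^ (m * g) * Real.exp (L / 2) / Real.sqrt ε with hK
  have hK0 : 0 ≤ K := by positivity
  have hs : Tendsto (fun τ => (n τ : ℝ) + d τ) atTop atTop :=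
    (tendsto_natCast_atTop_atTop.comp hn).atTop_add_atTop (tendsto_natCast_atTop_atTop.comp hd)
  have hlim : Tendsto (fun τ => ENNReal.ofReal (M / ((n τ : ℝ) + d τ) +
      K * Real.exp (-((n τ : ℝ) + d τ)))) atTop (𝓝 0) := by
    have h1 : Tendsto (fun τ => M / ((n τ : ℝ) + d τ)) atTop (𝓝 0) := hs.const_div_atTop M
    have h2 : Tendsto (fun τ => K * Real.exp (-((n τ : ℝ) + d τ))) atTop (𝓝 (K * 0)) :=
      (Real.tendsto_exp_neg_atTop_nhds_zero.comp hs).const_mul K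
    have h3 := ENNReal.tendsto_ofReal (h1.add h2)
    simpa using h3
  refine tendsto_of_tendsto_of_tendsto_of_le_of_le' tendsto_const_nhds hlim
    (Eventually.of_forall fun _ => zero_le) ?_
  have hrate : ∀ᶠ τ in atTop, (((n τ : ℝ) + d τ) / ((n τ : ℝ) * d τ)) / t τ < C / (|κ| + 1) :=
    ht1.eventually_lt_const (by positivity)
  have htc : ∀ᶠ τ in atTop, t τ < c / 2 := ht0.eventually_lt_const (by positivity)
  filter_upwards [hrate, htc, hn.eventually_gt_atTop 0, hd.eventually_gt_atTop 0]
    with τ hr ht hnp hdp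
  have hnR : (0 : ℝ) < n τ := by exact_mod_cast hnp
  have hdR : (0 : ℝ) < d τ := by exact_mod_cast hdp
  obtain ⟨S, hSC, hScard, hSnet⟩ := hnet (n τ * d τ) (Nat.mul_pos hnp hdp)
  set T : Finset (Fin g → Fin m → ℝ) :=
    Fintype.piFinset fun _ => Fintype.piFinset fun _ => S with hTdef
  have hTC : ∀ α ∈ T, ∀ k l, α k l ∈ Cα := by
    intro α hα k l
    exact hSC _ (Fintype.mem_piFinset.1 (Fintype.mem_piFinset.1 hα k) l)
  have hT : ∀ θ ∈ Θ, ∃ α ∈ T, ∀ k l, |θ.2.2 k l - α k l| ≤ 1 / (n τ * d τ : ℕ) ∧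
      |ψ (θ.2.2 k l) - ψ (α k l)| ≤ L * (1 / (n τ * d τ : ℕ)) := by
    intro θ hθ
    have hθC := (hΘ θ hθ).2.2.2.2
    choose α hαS hα using fun k l => hSnet (θ.2.2 k l) (hθC k l)
    refine ⟨α, ?_, fun k l => ⟨hα k l, ?_⟩⟩
    · exact Fintype.mem_piFinset.2 fun k => Fintype.mem_piFinset.2 fun l => hαS k l
    · exact (hLip _ (hθC k l) _ (hSC _ (hαS k l))).trans
        (mul_le_mul_of_nonneg_left (hα k l) hL)
  set F : Finset ((Fin (n τ) → Fin g) × (Fin (d τ) → Fin m)) := Finset.univ.filter fun zw =>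
    ¬ ((hamSim zw.1 (zs τ) : ℝ) ≤ t τ * (n τ : ℝ) ∧ (hamSim zw.2 (ws τ) : ℝ) ≤ t τ * (d τ : ℝ))
    with hF
  have hH : ∀ α ∈ T, ∀ zw ∈ F, C * (n τ * d τ * t τ) ≤
      ∑ i, ∑ j, hell b ψ (θs.2.2 (zs τ i) (ws τ j)) (α (zw.1 i) (zw.2 j)) := by
    intro α hα zw hzw
    have hbad := (Finset.mem_filter.1 hzw).2
    have hpos : (0 : ℝ) ≤ n τ * d τ * t τ := by
      have := (htpos τ).le
      positivity
    rcases not_and_or.1 hbad with h | h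
    · have := sum_ge_of_hamSim_lt (fun k l k' l' => hell b ψ (θs.2.2 k l) (α k' l'))
        (fun _ _ _ _ => hell_nonneg _ _ _ _) (zs τ) zw.1 (ws τ) zw.2 hm hδ.le (htpos τ).le hc.le
        (by linarith) (by
          intro k₁ k₂ hne
          by_contra! hcon
          apply hne
          apply hrowsdist
          intro l
          by_contra hl
          obtain ⟨k', l', hlt⟩ := hcon l
          exact absurd (hsep k₁ l k₂ l hl _ (hCA _ (hTC α hα k' l'))) (not_le.2 hlt))
        (hregz τ) (hregw τ) (not_le.1 h)
      exact (mul_le_mul_of_nonneg_right (min_le_left _ _) hpos).trans this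
    · have := sum_ge_of_hamSim_lt (fun l k l' k' => hell b ψ (θs.2.2 k l) (α k' l'))
        (fun _ _ _ _ => hell_nonneg _ _ _ _) (ws τ) zw.2 (zs τ) zw.1 hg hδ.le (htpos τ).le hc.le
        (by linarith) (by
          intro l₁ l₂ hne
          by_contra! hcon
          apply hne
          apply hcolsdist
          intro k
          by_contra hk
          obtain ⟨l', k', hlt⟩ := hcon k
          exact absurd (hsep k l₁ k l₂ hk _ (hCA _ (hTC α hα k' l'))) (not_le.2 hlt))
        (hregw τ) (hregz τ) (not_le.1 h)
      rw [Finset.sum_comm, mul_comm (d τ : ℝ) (n τ : ℝ)] at this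
      exact (mul_le_mul_of_nonneg_right (min_le_right _ _) hpos).trans this
  have hmain := prob_le hnp hdp b ψ hb hc hε Θ θs hθs hΘ₁ hΘ₂ (zs τ) (ws τ) T hT
    (fun α hα k l => hnorm _ (hCA _ (hTC α hα k l))) hprob hmom hM F hH
  have hmap := Measure.le_map_apply (μ := P) (hXmeas τ).aemeasurable
    {x | ε * completeLik b ψ θs (zs τ) (ws τ) x ≤
        ⨆ θ : Θ, ∑ zw ∈ F, completeLik b ψ (θ : Param g m) zw.1 zw.2 x}
  rw [hXlaw τ] at hmap
  have hset : {ω | ε * completeLik b ψ θs (zs τ) (ws τ) (X τ ω) ≤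
      ⨆ θ : Θ, ∑ zw : (Fin (n τ) → Fin g) × (Fin (d τ) → Fin m),
        Set.indicator {zw : (Fin (n τ) → Fin g) × (Fin (d τ) → Fin m) |
          ¬ ((hamSim zw.1 (zs τ) : ℝ) ≤ t τ * (n τ : ℝ) ∧
            (hamSim zw.2 (ws τ) : ℝ) ≤ t τ * (d τ : ℝ))}
          (fun zw => completeLik b ψ (θ : Param g m) zw.1 zw.2 (X τ ω)) zw} =
      X τ ⁻¹' {x | ε * completeLik b ψ θs (zs τ) (ws τ) x ≤
        ⨆ θ : Θ, ∑ zw ∈ F, completeLik b ψ (θ : Param g m) zw.1 zw.2 x} := by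
    ext ω
    simp only [Set.mem_ofPred_eq, Set.mem_preimage, hF, Finset.sum_filter, Set.indicator_apply]
  rw [hset]
  refine hmap.trans (hmain.trans (ENNReal.ofReal_le_ofReal (add_le_add le_rfl ?_)))
  have hTcard : T.card ≤ (R * (n τ * d τ)) ^ (m * g) := by
    rw [hTdef]
    simp only [Fintype.card_piFinset, Finset.prod_const, Finset.card_univ, Fintype.card_fin]
    rw [← pow_mul]
    exact Nat.pow_le_pow_left hScard _
  have hFcard : F.card ≤ g ^ n τ * m ^ d τ := by
    refine (Finset.card_le_univ _).trans (le_of_eq ?_)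
    simp
  have hrate' : (|κ| + 1) * ((n τ : ℝ) + d τ) ≤ C * (n τ * d τ * t τ) := by
    have ht0 := htpos τ
    rw [div_div, div_lt_div_iff₀ (by positivity) (by positivity)] at hr
    linarith
  exact exponential_bound hε hc hTcard hFcard hrate'
end
end

section
/- Bernstein-type bounds for empirical block means: in the Latent Block Model under assumptions H1–H4, with x̂_{kℓ}(z,w) = Σ_{ij}X_{ij}z_{ik}w_{jℓ}/(z_{·k}w_{·ℓ}) and x̄_{kℓ}(z,w) = E_{θ*}[x̂_{kℓ}(z,w)|z*,w*], for all ε > 0: (i) P( max over all assignments (z,w) and all (k,ℓ) of π̂_k(z)ρ̂_ℓ(w)|x̂_{kℓ}−x̄_{kℓ}| > ε ) ≤ g^{n+1} m^{d+1} exp( − ndε²/(2(σ̄²+κ^{−1}ε)) ); and (ii) restricting the maximum to c/2-regular assignments, P( max_{(z,w) c/2-regular} max_{k,ℓ} |x̂_{kℓ}−x̄_{kℓ}| > ε ) ≤ g^{n+1} m^{d+1} exp( − ndc²ε²/(8(σ̄²+κ^{−1}ε)) ). -/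
/-!
Each entry of `X` is centred by `ψ'(α)`, and its moment generating function at `t` is at most
`exp (ψ (α + t) - ψ α - t ψ' α) ≤ exp (σ̄² t² / 2)` whenever `|t| ≤ κ`, because `α + t` then stays
in `[-Mα, Mα]`, where `ψ'' ≤ σ̄²` (`lintegral_exp_expFam_le`, `taylor_two_le`). That `σ̄² ≥ 0`
follows from the midpoint convexity of `ψ` (`two_mul_le_logPartition`).

By independence and Markov's inequality (`chernoff_block`), the centred sum `S_B` over a block `B`
satisfies `P (|S_B| > r) ≤ 2 exp (|B| σ̄² t² / 2 - t r)` for `0 ≤ t ≤ κ`. The choice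
`t = ε / (σ̄² + ε / κ)`, which never exceeds `κ`, gives for every `N ≤ r / ε` with `|B| ≤ r / ε`
the bound `2 exp (-N ε² / (2 (σ̄² + ε / κ)))` (`block_tail`). Part (i) is `r = n d ε`, `N = n d`;
part (ii) is `r = |B| ε`, `N = n d c² / 4`.

A union bound concludes (`union_bound`). The event attached to `(z, w, k, l)` depends only on the
sets `z⁻¹(k)` and `w⁻¹(l)`, so there are at most `2 ^ n * 2 ^ d` events. The constraint
`π_k ≤ 1 - c` forces `g ≥ 2` and likewise `m ≥ 2`, which leaves room for the factor `2` of the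
two-sided tail.
-/

open MeasureTheory
open scoped BigOperators ENNReal

noncomputable section

/-- Empirical block mean `x̂_{kℓ}(z,w) = Σ_{ij} x_{ij} z_{ik} w_{jℓ} / (z_{·k} w_{·ℓ})`. -/
def blockMeanHat {n d g m : ℕ} (z : Fin n → Fin g) (w : Fin d → Fin m)
    (x : Fin n × Fin d → ℝ) (k : Fin g) (l : Fin m) : ℝ :=
  (∑ p : Fin n × Fin d, if z p.1 = k ∧ w p.2 = l then x p else 0) /
    ((catCount z k : ℝ) * (catCount w l : ℝ))

/-- Conditional block mean `x̄_{kℓ}(z,w) = E_{θ*}[x̂_{kℓ}(z,w) | z*,w*]`. -/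
def blockMeanBar (ψ : ℝ → ℝ) {n d g m : ℕ} (αs : Fin g → Fin m → ℝ)
    (zs : Fin n → Fin g) (ws : Fin d → Fin m)
    (z : Fin n → Fin g) (w : Fin d → Fin m) (k : Fin g) (l : Fin m) : ℝ :=
  (∑ p : Fin n × Fin d, if z p.1 = k ∧ w p.2 = l then deriv ψ (αs (zs p.1) (ws p.2)) else 0) /
    ((catCount z k : ℝ) * (catCount w l : ℝ))

/-! ### The log-partition function -/

/-- Only an upper bound is claimed: `b` need not be measurable, and `withDensity` then
uses the largest measurable minorant of the density. -/
lemma lintegral_exp_expFam_le {b ψ : ℝ → ℝ} {a t : ℝ}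
    (h : IsProbabilityMeasure (expFam b ψ (a + t))) (s : ℝ) :
    ∫⁻ x, ENNReal.ofReal (Real.exp (t * x - s)) ∂(expFam b ψ a) ≤
      ENNReal.ofReal (Real.exp (ψ (a + t) - ψ a - s)) := by
  have hone : ∫⁻ x, ENNReal.ofReal (b x * Real.exp ((a + t) * x - ψ (a + t))) = 1 := by
    have := h.measure_univ
    rwa [expFam, withDensity_apply _ MeasurableSet.univ, Measure.restrict_univ] at this
  obtain ⟨f, hfm, hfle, hf⟩ := exists_measurable_le_withDensity_eq (volume : Measure ℝ)
    (fun x => ENNReal.ofReal (b x * Real.exp (a * x - ψ a)))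
  rw [expFam, ← hf, lintegral_withDensity_eq_lintegral_mul _ hfm (by fun_prop)]
  calc ∫⁻ x, (f * fun x => ENNReal.ofReal (Real.exp (t * x - s))) x
      ≤ ∫⁻ x, ENNReal.ofReal (Real.exp (ψ (a + t) - ψ a - s)) *
          ENNReal.ofReal (b x * Real.exp ((a + t) * x - ψ (a + t))) := by
        refine lintegral_mono fun x => ?_
        refine (mul_le_mul_left (hfle x) _).trans_eq ?_
        rw [← ENNReal.ofReal_mul' (Real.exp_nonneg _), ← ENNReal.ofReal_mul (Real.exp_nonneg _),
          mul_assoc, ← Real.exp_add, mul_left_comm, ← Real.exp_add]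
        congr 3
        ring
    _ = _ := by rw [lintegral_const_mul' _ _ ENNReal.ofReal_ne_top, hone, mul_one]

/-- Midpoint convexity of `ψ`, from `e^y + e^{-y} ≥ 2` integrated against the law. -/
lemma two_mul_le_logPartition {b ψ : ℝ → ℝ} {a t : ℝ}
    (h0 : IsProbabilityMeasure (expFam b ψ a))
    (h1 : IsProbabilityMeasure (expFam b ψ (a + t)))
    (h2 : IsProbabilityMeasure (expFam b ψ (a + -t))) :
    2 * ψ a ≤ ψ (a + t) + ψ (a + -t) := by
  -- the shift that makes the two bounds on the right equal
  set s : ℝ := (ψ (a + t) - ψ (a + -t)) / 2 with hs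
  have key : (2 : ℝ≥0∞) ≤ ENNReal.ofReal (2 * Real.exp ((ψ (a + t) + ψ (a + -t)) / 2 - ψ a)) := by
    calc (2 : ℝ≥0∞) = ∫⁻ _, 2 ∂(expFam b ψ a) := by simp
      _ ≤ ∫⁻ x, (ENNReal.ofReal (Real.exp (t * x - s)) +
            ENNReal.ofReal (Real.exp (-t * x - -s))) ∂(expFam b ψ a) := by
          refine lintegral_mono fun x => ?_
          rw [← ENNReal.ofReal_add (Real.exp_nonneg _) (Real.exp_nonneg _)]
          rw [show (2 : ℝ≥0∞) = ENNReal.ofReal 2 by simp]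
          refine ENNReal.ofReal_le_ofReal ?_
          linarith [Real.add_one_le_exp (t * x - s), Real.add_one_le_exp (-t * x - -s)]
      _ ≤ _ := by
          rw [lintegral_add_left (by fun_prop)]
          refine (add_le_add (lintegral_exp_expFam_le h1 s)
            (lintegral_exp_expFam_le h2 (-s))).trans_eq ?_
          rw [← ENNReal.ofReal_add (Real.exp_nonneg _) (Real.exp_nonneg _), two_mul]
          congr 3 <;> rw [hs] <;> ring
  rw [show (2 : ℝ≥0∞) = ENNReal.ofReal 2 by simp,
    ENNReal.ofReal_le_ofReal_iff (by positivity)] at key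
  have : (1 : ℝ) ≤ Real.exp ((ψ (a + t) + ψ (a + -t)) / 2 - ψ a) := by linarith
  have := Real.one_le_exp_iff.mp this
  linarith

/-- Second-order Taylor bound with `σ` any bound on the second derivative. -/
lemma taylor_two_le {ψ : ℝ → ℝ} {U : Set ℝ} (hU : IsOpen U) (hψ : ContDiffOn ℝ 2 ψ U)
    {M σ : ℝ} (hM : Set.Icc (-M) M ⊆ U) (hσ : ∀ x ∈ Set.Icc (-M) M, deriv (deriv ψ) x ≤ σ)
    {a t : ℝ} (ha : a ∈ Set.Icc (-M) M) (hat : a + t ∈ Set.Icc (-M) M) :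
    ψ (a + t) - ψ a - t * deriv ψ a ≤ σ * t ^ 2 / 2 := by
  have hd1 : ∀ x ∈ U, HasDerivAt ψ (deriv ψ x) x := fun x hx =>
    ((hψ.differentiableOn (by norm_num)).differentiableAt (hU.mem_nhds hx)).hasDerivAt
  have hd2 : ∀ x ∈ U, HasDerivAt (deriv ψ) (deriv (deriv ψ) x) x := fun x hx =>
    (((hψ.deriv_of_isOpen (m := 1) hU (by norm_num)).differentiableOn
      (by norm_num)).differentiableAt (hU.mem_nhds hx)).hasDerivAt
  have hf1 : ∀ x ∈ U, HasDerivAt (fun x => σ * x ^ 2 / 2 - ψ x) (σ * x - deriv ψ x) x := by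
    intro x hx
    refine ((((hasDerivAt_pow 2 x).const_mul σ).div_const 2).sub (hd1 x hx)).congr_deriv ?_
    norm_num
    ring
  have hf2 : ∀ x ∈ U, HasDerivAt (fun x => σ * x - deriv ψ x) (σ - deriv (deriv ψ) x) x := by
    intro x hx
    exact (((hasDerivAt_id x).const_mul σ).sub (hd2 x hx)).congr_deriv (by simp)
  have hconv : ConvexOn ℝ (Set.Icc (-M) M) (fun x => σ * x ^ 2 / 2 - ψ x) := by
    refine convexOn_of_hasDerivWithinAt2_nonneg (convex_Icc _ _)
      (fun x hx => (hf1 x (hM hx)).continuousAt.continuousWithinAt)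
      (fun x hx => (hf1 x (hM (interior_subset hx))).hasDerivWithinAt)
      (fun x hx => (hf2 x (hM (interior_subset hx))).hasDerivWithinAt)
      (fun x hx => sub_nonneg.2 (hσ x (interior_subset hx)))
  rcases lt_trichotomy t 0 with ht | ht | ht
  · have := hconv.slope_le_of_hasDerivAt hat ha (by linarith) (hf1 a (hM ha))
    rw [slope_def_field, div_le_iff₀ (by linarith)] at this
    nlinarith
  · simp [ht]
  · have := hconv.le_slope_of_hasDerivAt ha hat (by linarith) (hf1 a (hM ha))
    rw [slope_def_field, le_div_iff₀ (by linarith)] at this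
    nlinarith

/-! ### Tail bound for a block sum -/

/-- Chernoff bound for the sum over a block `B` of independent coordinates whose centred
moment generating functions satisfy a sub-Gaussian bound at the single exponent `t`. -/
lemma chernoff_block {ι Ω : Type*} [Fintype ι] [MeasurableSpace Ω] {P : Measure Ω}
    {X : Ω → ι → ℝ} (hX : Measurable X) {ν : ι → Measure ℝ} [∀ p, IsProbabilityMeasure (ν p)]
    (hlaw : P.map X = Measure.pi ν) {μ : ι → ℝ} {σ t : ℝ}
    (hmgf : ∀ p, ∫⁻ x, ENNReal.ofReal (Real.exp (t * x - t * μ p)) ∂(ν p) ≤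
      ENNReal.ofReal (Real.exp (σ * t ^ 2 / 2))) (B : Finset ι) (s : ℝ) :
    P {ω | s ≤ t * ∑ p ∈ B, (X ω p - μ p)} ≤
      ENNReal.ofReal (Real.exp (B.card * (σ * t ^ 2 / 2) - s)) := by
  set F : ι → (ι → ℝ) → ℝ≥0∞ := fun p x => ENNReal.ofReal (Real.exp (t * x p - t * μ p)) with hF
  have hFm : ∀ p, Measurable (F p) := fun p => by fun_prop
  have hind : ProbabilityTheory.iIndepFun F (Measure.pi ν) :=
    ProbabilityTheory.iIndepFun_pi (μ := ν)
      (X := fun p x => ENNReal.ofReal (Real.exp (t * x - t * μ p)))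
      (fun p => by fun_prop)
  have hint : ∫⁻ x, ∏ p ∈ B, F p x ∂(Measure.pi ν) ≤
      ENNReal.ofReal (Real.exp (B.card * (σ * t ^ 2 / 2))) := by
    rw [ProbabilityTheory.lintegral_prod_eq_prod_lintegral_of_indepFun B F hind hFm]
    calc ∏ p ∈ B, ∫⁻ x, F p x ∂(Measure.pi ν)
        ≤ ∏ p ∈ B, ENNReal.ofReal (Real.exp (σ * t ^ 2 / 2)) := by
          refine Finset.prod_le_prod' fun p _ => ?_
          refine le_trans (le_of_eq ?_) (hmgf p)
          exact (measurePreserving_eval ν p).lintegral_comp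
            (f := fun x => ENNReal.ofReal (Real.exp (t * x - t * μ p))) (by fun_prop)
      _ = _ := by
          rw [Finset.prod_const, ← ENNReal.ofReal_pow (Real.exp_nonneg _), ← Real.exp_nat_mul]
  have hprod : ∀ x : ι → ℝ, ∏ p ∈ B, F p x =
      ENNReal.ofReal (Real.exp (t * ∑ p ∈ B, (x p - μ p))) := by
    intro x
    rw [← ENNReal.ofReal_prod_of_nonneg (fun _ _ => Real.exp_nonneg _), ← Real.exp_sum,
      Finset.mul_sum]
    simp only [mul_sub]
  have hset : {ω | s ≤ t * ∑ p ∈ B, (X ω p - μ p)} =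
      X ⁻¹' {x | s ≤ t * ∑ p ∈ B, (x p - μ p)} := rfl
  have hms : MeasurableSet {x : ι → ℝ | s ≤ t * ∑ p ∈ B, (x p - μ p)} :=
    measurableSet_le measurable_const (by fun_prop)
  rw [hset, ← Measure.map_apply hX hms, hlaw]
  calc Measure.pi ν {x : ι → ℝ | s ≤ t * ∑ p ∈ B, (x p - μ p)}
      ≤ Measure.pi ν {x | ENNReal.ofReal (Real.exp s) ≤ ∏ p ∈ B, F p x} := by
        refine measure_mono fun x hx => ?_
        rw [Set.mem_ofPred_eq, hprod]
        exact ENNReal.ofReal_le_ofReal (Real.exp_le_exp.2 hx)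
    _ ≤ (∫⁻ x, ∏ p ∈ B, F p x ∂(Measure.pi ν)) / ENNReal.ofReal (Real.exp s) :=
        meas_ge_le_lintegral_div (Finset.measurable_prod _ fun p _ => hFm p).aemeasurable
          (by simp [Real.exp_pos]) ENNReal.ofReal_ne_top
    _ ≤ ENNReal.ofReal (Real.exp (B.card * (σ * t ^ 2 / 2))) / ENNReal.ofReal (Real.exp s) :=
        ENNReal.div_le_div_right hint _
    _ = _ := by rw [← ENNReal.ofReal_div_of_pos (Real.exp_pos _), Real.exp_sub]

/-- Two-sided tail of a block sum, at the exponent `t = ε / (σ + κ⁻¹ * ε) ∈ [0, κ]`. -/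
lemma block_tail {ι Ω : Type*} [Fintype ι] [MeasurableSpace Ω] {P : Measure Ω}
    {X : Ω → ι → ℝ} (hX : Measurable X) {ν : ι → Measure ℝ} [∀ p, IsProbabilityMeasure (ν p)]
    (hlaw : P.map X = Measure.pi ν) {μ : ι → ℝ} {σ κ : ℝ} (hσ : 0 ≤ σ) (hκ : 0 < κ)
    (hmgf : ∀ t, |t| ≤ κ → ∀ p, ∫⁻ x, ENNReal.ofReal (Real.exp (t * x - t * μ p)) ∂(ν p) ≤
      ENNReal.ofReal (Real.exp (σ * t ^ 2 / 2)))
    (B : Finset ι) {ε r N : ℝ} (hε : 0 < ε) (hBr : B.card * ε ≤ r) (hNr : N * ε ≤ r) :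
    P {ω | r < |∑ p ∈ B, (X ω p - μ p)|} ≤
      ENNReal.ofReal (2 * Real.exp (-(N * ε ^ 2) / (2 * (σ + κ⁻¹ * ε)))) := by
  set D : ℝ := σ + κ⁻¹ * ε with hD
  have hDpos : 0 < D := by positivity
  set t : ℝ := ε / D with ht
  have htpos : 0 < t := by positivity
  have htκ : t ≤ κ := by
    rw [ht, div_le_iff₀ hDpos, hD, mul_add, mul_inv_cancel_left₀ hκ.ne']
    nlinarith [mul_nonneg hκ.le hσ]
  have htD : t * D = ε := div_mul_cancel₀ _ hDpos.ne'
  have hσD : σ ≤ D := by rw [hD]; linarith [show 0 < κ⁻¹ * ε by positivity]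
  have hexp : B.card * (σ * t ^ 2 / 2) - t * r ≤ -(N * ε ^ 2) / (2 * D) := by
    have h1 : -(N * ε ^ 2) / (2 * D) = -(t * (N * ε)) / 2 := by rw [ht]; field_simp
    have h2 : σ * t ^ 2 ≤ t * ε := by
      calc σ * t ^ 2 ≤ D * t ^ 2 := by gcongr
        _ = t * (t * D) := by ring
        _ = t * ε := by rw [htD]
    have h3 : (B.card : ℝ) * (σ * t ^ 2) ≤ B.card * (t * ε) := by gcongr
    have h4 : t * (B.card * ε) ≤ t * r := by gcongr
    have h5 : t * (N * ε) ≤ t * r := by gcongr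
    rw [h1]
    linarith
  have habs : |t| ≤ κ := by rwa [abs_of_pos htpos]
  have hup := chernoff_block hX hlaw (hmgf t habs) B (t * r)
  have hlow := chernoff_block hX hlaw (hmgf (-t) (by rwa [abs_neg])) B (t * r)
  rw [neg_sq] at hlow
  calc P {ω | r < |∑ p ∈ B, (X ω p - μ p)|}
      ≤ P ({ω | t * r ≤ t * ∑ p ∈ B, (X ω p - μ p)} ∪
          {ω | t * r ≤ -t * ∑ p ∈ B, (X ω p - μ p)}) := by
        refine measure_mono fun ω hω => ?_
        rcases lt_abs.1 (show r < |∑ p ∈ B, (X ω p - μ p)| from hω) with h | h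
        · exact Or.inl (mul_le_mul_of_nonneg_left h.le htpos.le)
        · refine Or.inr ?_
          rw [Set.mem_ofPred_eq, neg_mul, ← mul_neg]
          exact mul_le_mul_of_nonneg_left h.le htpos.le
    _ ≤ _ := (measure_union_le _ _).trans (add_le_add hup hlow)
    _ ≤ _ := by
        rw [two_mul, ENNReal.ofReal_add (Real.exp_nonneg _) (Real.exp_nonneg _)]
        gcongr

/-! ### From the maximum to a union over blocks -/

lemma exists_lt_of_lt_real_iSup {ι : Sort*} {f : ι → ℝ} {ε : ℝ} (hε : 0 < ε)
    (h : ε < ⨆ i, f i) : ∃ i, ε < f i := by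
  by_contra! hcon
  exact absurd h (not_lt.2 (Real.iSup_le hcon hε.le))

/-- Union bound over pairs of a row set and a column set. There are only `2 ^ n * 2 ^ d` of these,
so for `g, m ≥ 2` the factor `2` of a two-sided tail is absorbed by `g ^ (n + 1) * m ^ (d + 1)`. -/
lemma union_bound {Ω : Type*} [MeasurableSpace Ω] {P : Measure Ω} {n d g m : ℕ}
    (hg : 2 ≤ g) (hm : 2 ≤ m) {A : Set Ω} {E : Finset (Fin n) × Finset (Fin d) → Set Ω} {y : ℝ}
    (hy : 0 ≤ y) (hA : A ⊆ ⋃ q, E q) (hE : ∀ q, P (E q) ≤ ENNReal.ofReal (2 * y)) :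
    P A ≤ ENNReal.ofReal ((g : ℝ) ^ (n + 1) * (m : ℝ) ^ (d + 1) * y) := by
  have hg' : (2 : ℝ) ≤ g := by exact_mod_cast hg
  have hm' : (2 : ℝ) ≤ m := by exact_mod_cast hm
  calc P A ≤ ∑ q, P (E q) := (measure_mono hA).trans (measure_iUnion_fintype_le _ _)
    _ ≤ ∑ _q : Finset (Fin n) × Finset (Fin d), ENNReal.ofReal (2 * y) :=
        Finset.sum_le_sum fun q _ => hE q
    _ = ENNReal.ofReal ((2 : ℝ) ^ n * 2 ^ d * (2 * y)) := by
        rw [Finset.sum_const, nsmul_eq_mul,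
          ENNReal.ofReal_mul (p := (2 : ℝ) ^ n * 2 ^ d) (by positivity)]
        congr 1
        rw [ENNReal.ofReal_mul (by positivity), ENNReal.ofReal_pow (by norm_num),
          ENNReal.ofReal_pow (by norm_num)]
        simp
    _ ≤ _ := by
        refine ENNReal.ofReal_le_ofReal ?_
        have h1 : (2 : ℝ) ^ (n + 1) ≤ (g : ℝ) ^ (n + 1) := by gcongr
        have h2 : (2 : ℝ) ^ d ≤ (m : ℝ) ^ (d + 1) :=
          (pow_le_pow_right₀ (by norm_num) (Nat.le_succ d)).trans (by gcongr)
        calc (2 : ℝ) ^ n * 2 ^ d * (2 * y) = 2 ^ (n + 1) * 2 ^ d * y := by ring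
          _ ≤ _ := by gcongr

/-- The rows (or columns) assigned to class `k`. -/
def classSet {n g : ℕ} (z : Fin n → Fin g) (k : Fin g) : Finset (Fin n) :=
  Finset.univ.filter fun i => z i = k

lemma blockMeanHat_sub_bar {n d g m : ℕ} (ψ : ℝ → ℝ) (αs : Fin g → Fin m → ℝ)
    (zs : Fin n → Fin g) (ws : Fin d → Fin m) (z : Fin n → Fin g) (w : Fin d → Fin m)
    (x : Fin n × Fin d → ℝ) (k : Fin g) (l : Fin m) :
    blockMeanHat z w x k l - blockMeanBar ψ αs zs ws z w k l =
      (∑ p ∈ classSet z k ×ˢ classSet w l, (x p - deriv ψ (αs (zs p.1) (ws p.2)))) /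
        ((catCount z k : ℝ) * (catCount w l : ℝ)) := by
  have hset : classSet z k ×ˢ classSet w l =
      Finset.univ.filter fun p : Fin n × Fin d => z p.1 = k ∧ w p.2 = l := by
    ext p
    simp [classSet]
  rw [blockMeanHat, blockMeanBar, ← sub_div, Finset.sum_sub_distrib, hset, Finset.sum_filter,
    Finset.sum_filter]

/-- A probability vector bounded above by `1 - c < 1` has at least two entries. -/
lemma two_le_of_simplex {g : ℕ} {c : ℝ} (hc : 0 < c) {πs : Fin g → ℝ}
    (hπ : ∀ k, πs k ∈ Set.Icc c (1 - c)) (hπ1 : ∑ k, πs k = 1) : 2 ≤ g := by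
  match g, πs, hπ, hπ1 with
  | 0, _, _, h => simp at h
  | 1, p, hp, h =>
    rw [Fin.sum_univ_one] at h
    linarith [(hp 0).2]
  | _ + 2, _, _, _ => omega

/-- **Proposition (Bernstein-type bounds for empirical block means).**  In the LBM under
H1–H4, for all `ε > 0`:
(i) `P(max_{z,w} max_{k,ℓ} π̂_k(z) ρ̂_ℓ(w) |x̂_{kℓ} − x̄_{kℓ}| > ε)
      ≤ g^{n+1} m^{d+1} exp(−ndε²/(2(σ̄² + κ⁻¹ε)))`;
(ii) restricting to `c/2`-regular assignments,
`P(max max |x̂_{kℓ} − x̄_{kℓ}| > ε) ≤ g^{n+1} m^{d+1} exp(−ndc²ε²/(8(σ̄² + κ⁻¹ε)))`. -/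
theorem stmt_15 {n d g m : ℕ} (hg : 0 < g) (hm : 0 < m)
    (b ψ : ℝ → ℝ) (Adom : Set ℝ)
    (hb : ∀ x, 0 ≤ b x)
    (hψ : ContDiffOn ℝ 2 ψ (interior Adom))
    (hnorm : ∀ a ∈ Adom, IsProbabilityMeasure (expFam b ψ a))
    (c : ℝ) (hc : 0 < c) (Cα : Set ℝ) (hCα : IsCompact Cα) (hCαA : Cα ⊆ interior Adom)
    (κ Mα : ℝ) (hκ : 0 < κ)
    (hband : ∀ a ∈ Cα, Set.Ioo (a - κ) (a + κ) ⊆ Set.Icc (-Mα) Mα)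
    (hMA : Set.Icc (-Mα) Mα ⊆ interior Adom)
    (πs : Fin g → ℝ) (ρs : Fin m → ℝ) (αs : Fin g → Fin m → ℝ)
    -- H1 for the true parameter
    (hπ : ∀ k, πs k ∈ Set.Icc c (1 - c)) (hπ1 : ∑ k, πs k = 1)
    (hρ : ∀ l, ρs l ∈ Set.Icc c (1 - c)) (hρ1 : ∑ l, ρs l = 1)
    (hαsC : ∀ k l, αs k l ∈ Cα)
    -- H3
    (hinj : Set.InjOn (expFam b ψ) Adom)
    -- H4
    (hrowsdist : ∀ k k', (∀ l, αs k l = αs k' l) → k = k')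
    (hcolsdist : ∀ l l', (∀ k, αs k l = αs k l') → l = l')
    -- true assignments (conditioned on) and the conditional law of the data
    (zs : Fin n → Fin g) (ws : Fin d → Fin m)
    {Ω : Type*} [MeasurableSpace Ω] (P : Measure Ω) [IsProbabilityMeasure P]
    (X : Ω → Fin n × Fin d → ℝ) (hXmeas : Measurable X)
    (hXlaw : P.map X = Measure.pi fun p : Fin n × Fin d =>
      expFam b ψ (αs (zs p.1) (ws p.2))) :
    ∀ ε : ℝ, 0 < ε →
      (P {ω | ε < ⨆ z : Fin n → Fin g, ⨆ w : Fin d → Fin m, ⨆ k, ⨆ l,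
            ((catCount z k : ℝ) / (n : ℝ)) * ((catCount w l : ℝ) / (d : ℝ)) *
              |blockMeanHat z w (X ω) k l - blockMeanBar ψ αs zs ws z w k l|} ≤
        ENNReal.ofReal ((g : ℝ) ^ (n + 1) * (m : ℝ) ^ (d + 1) *
          Real.exp (-((n : ℝ) * (d : ℝ) * ε ^ 2) /
            (2 * (sSup ((fun a => deriv (deriv ψ) a) '' Set.Icc (-Mα) Mα) + κ⁻¹ * ε))))) ∧
      (P {ω | ε < ⨆ zw : {zw : (Fin n → Fin g) × (Fin d → Fin m) //
              (∀ k, c * (n : ℝ) / 2 ≤ (catCount zw.1 k : ℝ)) ∧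
              (∀ l, c * (d : ℝ) / 2 ≤ (catCount zw.2 l : ℝ))}, ⨆ k, ⨆ l,
            |blockMeanHat (zw : (Fin n → Fin g) × (Fin d → Fin m)).1
                (zw : (Fin n → Fin g) × (Fin d → Fin m)).2 (X ω) k l -
              blockMeanBar ψ αs zs ws (zw : (Fin n → Fin g) × (Fin d → Fin m)).1
                (zw : (Fin n → Fin g) × (Fin d → Fin m)).2 k l|} ≤
        ENNReal.ofReal ((g : ℝ) ^ (n + 1) * (m : ℝ) ^ (d + 1) *
          Real.exp (-((n : ℝ) * (d : ℝ) * c ^ 2 * ε ^ 2) /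
            (8 * (sSup ((fun a => deriv (deriv ψ) a) '' Set.Icc (-Mα) Mα) + κ⁻¹ * ε))))) := by
  have hg2 : 2 ≤ g := two_le_of_simplex hc hπ hπ1
  have hm2 : 2 ≤ m := two_le_of_simplex hc hρ hρ1
  set σ : ℝ := sSup ((fun a => deriv (deriv ψ) a) '' Set.Icc (-Mα) Mα) with hσdef
  have hAd : ∀ a ∈ Set.Icc (-Mα) Mα, a ∈ Adom := fun a ha => interior_subset (hMA ha)
  have hσle : ∀ x ∈ Set.Icc (-Mα) Mα, deriv (deriv ψ) x ≤ σ := by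
    have hcont : ContinuousOn (fun a => deriv (deriv ψ) a) (Set.Icc (-Mα) Mα) :=
      (((hψ.deriv_of_isOpen (m := 1) isOpen_interior (by norm_num)).deriv_of_isOpen (m := 0)
        isOpen_interior (by norm_num)).continuousOn).mono hMA
    exact fun x hx => le_csSup (isCompact_Icc.image_of_continuousOn hcont).bddAbove
      (Set.mem_image_of_mem _ hx)
  -- the open band extends to the closed one since `[-Mα, Mα]` is closed
  have hbandc : ∀ a ∈ Cα, ∀ t, |t| ≤ κ → a + t ∈ Set.Icc (-Mα) Mα := by
    intro a ha t ht
    have h := isClosed_Icc.closure_subset_iff.2 (hband a ha)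
    rw [closure_Ioo (by linarith)] at h
    have := abs_le.1 ht
    exact h ⟨by linarith, by linarith⟩
  have hband0 : ∀ a ∈ Cα, a ∈ Set.Icc (-Mα) Mα := fun a ha => by
    simpa using hbandc a ha 0 (by simpa using hκ.le)
  have htaylor : ∀ a ∈ Cα, ∀ t, |t| ≤ κ → ψ (a + t) - ψ a - t * deriv ψ a ≤ σ * t ^ 2 / 2 :=
    fun a ha t ht => taylor_two_le isOpen_interior hψ hMA hσle (hband0 a ha) (hbandc a ha t ht)
  have hσ0 : 0 ≤ σ := by
    have ha := hαsC ⟨0, hg⟩ ⟨0, hm⟩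
    set a := αs ⟨0, hg⟩ ⟨0, hm⟩
    have hk : |κ| ≤ κ := (abs_of_pos hκ).le
    have hk' : |-κ| ≤ κ := by rwa [abs_neg]
    have h1 := htaylor a ha κ hk
    have h2 := htaylor a ha (-κ) hk'
    have h3 := two_mul_le_logPartition (hnorm a (hAd _ (hband0 a ha)))
      (hnorm _ (hAd _ (hbandc a ha κ hk))) (hnorm _ (hAd _ (hbandc a ha (-κ) hk')))
    have h4 : 0 ≤ σ * κ ^ 2 := by linarith [neg_sq κ ▸ h2]
    exact nonneg_of_mul_nonneg_left h4 (by positivity)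
  set ν : Fin n × Fin d → Measure ℝ := fun p => expFam b ψ (αs (zs p.1) (ws p.2)) with hν
  set μ : Fin n × Fin d → ℝ := fun p => deriv ψ (αs (zs p.1) (ws p.2)) with hμ
  have : ∀ p, IsProbabilityMeasure (ν p) := fun p => hnorm _ (hAd _ (hband0 _ (hαsC _ _)))
  have hmgf : ∀ t, |t| ≤ κ → ∀ p, ∫⁻ x, ENNReal.ofReal (Real.exp (t * x - t * μ p)) ∂(ν p) ≤
      ENNReal.ofReal (Real.exp (σ * t ^ 2 / 2)) := by
    intro t ht p
    refine (lintegral_exp_expFam_le (hnorm _ (hAd _ (hbandc _ (hαsC _ _) t ht))) _).trans ?_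
    exact ENNReal.ofReal_le_ofReal (Real.exp_le_exp.2 (htaylor _ (hαsC _ _) t ht))
  intro ε hε
  -- without entries the exponents vanish and the right-hand sides are at least `1`
  have htriv : ∀ A : Set Ω,
      P A ≤ ENNReal.ofReal ((g : ℝ) ^ (n + 1) * (m : ℝ) ^ (d + 1)) := by
    intro A
    refine prob_le_one.trans ?_
    rw [← ENNReal.ofReal_one]
    refine ENNReal.ofReal_le_ofReal (one_le_mul_of_one_le_of_one_le ?_ ?_)
    · exact one_le_pow₀ (by exact_mod_cast hg)
    · exact one_le_pow₀ (by exact_mod_cast hm)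
  by_cases hnd : (n : ℝ) * d = 0
  · rw [hnd]
    simp only [zero_mul, neg_zero, zero_div, Real.exp_zero, mul_one]
    exact ⟨htriv _, htriv _⟩
  have hn : 0 < (n : ℝ) := by
    rcases Nat.eq_zero_or_pos n with h | h
    · exact absurd (by simp [h]) hnd
    · exact_mod_cast h
  have hd : 0 < (d : ℝ) := by
    rcases Nat.eq_zero_or_pos d with h | h
    · exact absurd (by simp [h]) hnd
    · exact_mod_cast h
  constructor
  · refine union_bound hg2 hm2 (Real.exp_nonneg _)
      (E := fun q => {ω | n * d * ε < |∑ p ∈ q.1 ×ˢ q.2, (X ω p - μ p)|}) ?_ ?_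
    · intro ω hω
      obtain ⟨z, hz⟩ := exists_lt_of_lt_real_iSup hε hω
      obtain ⟨w, hw⟩ := exists_lt_of_lt_real_iSup hε hz
      obtain ⟨k, hk⟩ := exists_lt_of_lt_real_iSup hε hw
      obtain ⟨l, hl⟩ := exists_lt_of_lt_real_iSup hε hk
      refine Set.mem_iUnion.2 ⟨(classSet z k, classSet w l), ?_⟩
      rw [blockMeanHat_sub_bar, abs_div, abs_of_nonneg (by positivity :
        (0 : ℝ) ≤ (catCount z k : ℝ) * (catCount w l : ℝ))] at hl
      -- an empty class contributes `0`, so its factor cannot vanish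
      have hz0 : (catCount z k : ℝ) ≠ 0 := by
        intro h
        simp [h] at hl
        linarith
      have hw0 : (catCount w l : ℝ) ≠ 0 := by
        intro h
        simp [h] at hl
        linarith
      rw [show ∀ S : ℝ, (catCount z k : ℝ) / n * ((catCount w l : ℝ) / d) *
        (S / ((catCount z k : ℝ) * (catCount w l : ℝ))) = S / (n * d) from
          fun S => by field_simp, lt_div_iff₀ (by positivity)] at hl
      rw [Set.mem_ofPred_eq, mul_comm]
      exact hl
    · intro q
      refine block_tail hXmeas hXlaw hσ0 hκ hmgf _ hε ?_ le_rfl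
      rw [Finset.card_product]
      push_cast
      have h1 : (q.1.card : ℝ) ≤ n := by exact_mod_cast (Finset.card_le_univ q.1).trans_eq (by simp)
      have h2 : (q.2.card : ℝ) ≤ d := by exact_mod_cast (Finset.card_le_univ q.2).trans_eq (by simp)
      gcongr
  · refine union_bound hg2 hm2 (Real.exp_nonneg _)
      (E := fun q => {ω | (c * n / 2 ≤ q.1.card ∧ c * d / 2 ≤ q.2.card) ∧
        (q.1 ×ˢ q.2).card * ε < |∑ p ∈ q.1 ×ˢ q.2, (X ω p - μ p)|}) ?_ ?_
    · intro ω hω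
      obtain ⟨⟨⟨z, w⟩, hz, hw⟩, h⟩ := exists_lt_of_lt_real_iSup hε hω
      obtain ⟨k, hk⟩ := exists_lt_of_lt_real_iSup hε h
      obtain ⟨l, hl⟩ := exists_lt_of_lt_real_iSup hε hk
      refine Set.mem_iUnion.2 ⟨(classSet z k, classSet w l), ⟨hz k, hw l⟩, ?_⟩
      have hz0 : 0 < (catCount z k : ℝ) := lt_of_lt_of_le (by positivity) (hz k)
      have hw0 : 0 < (catCount w l : ℝ) := lt_of_lt_of_le (by positivity) (hw l)
      rw [blockMeanHat_sub_bar, abs_div, abs_of_nonneg (by positivity :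
        (0 : ℝ) ≤ (catCount z k : ℝ) * (catCount w l : ℝ)), lt_div_iff₀ (by positivity)] at hl
      rw [Finset.card_product, mul_comm]
      push_cast
      exact hl
    · intro q
      by_cases hq : c * n / 2 ≤ q.1.card ∧ c * d / 2 ≤ q.2.card
      · refine (measure_mono fun ω hω => hω.2).trans ?_
        have hN : (n : ℝ) * d * c ^ 2 / 4 ≤ (q.1 ×ˢ q.2).card := by
          rw [Finset.card_product]
          push_cast
          calc (n : ℝ) * d * c ^ 2 / 4 = c * n / 2 * (c * d / 2) := by ring
            _ ≤ _ := mul_le_mul hq.1 hq.2 (by positivity) (by positivity)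
        refine (block_tail hXmeas hXlaw hσ0 hκ hmgf _ hε le_rfl
          (mul_le_mul_of_nonneg_right hN hε.le)).trans_eq ?_
        congr 3
        have : σ + κ⁻¹ * ε ≠ 0 := by positivity
        field_simp
        norm_num
      · refine le_of_eq_of_le ?_ zero_le
        convert measure_empty (μ := P)
        ext ω
        simp only [Set.mem_ofPred_eq, Set.mem_empty_iff_false, iff_false]
        exact fun h => hq h.1
end
end

section
/- If X is a real random variable with E[X]=0 that is sub-exponential with parameters (σ², b), then |X| is sub-exponential with parameters (8σ², 2√2·b); that is, E[exp(λ(|X|−E|X|))] ≤ exp(8λ²σ²/2) for all |λ| ≤ 1/(2√2·b). -/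
/-!
Write `A = E[exp(l|X|)]`, `B = E[exp(-l|X|)]`, `m = E|X|`, and `M(±l) = E[exp(±lX)]`.
Jensen's inequality gives `exp(-lm) ≤ B`, hence `E[exp(l(|X| - m))] = A * exp(-lm) ≤ A * B`.
Pointwise, `{exp(l|x|), exp(-l|x|)} = {exp(lx), exp(-lx)}`, so `A + B = M(l) + M(-l)`, while `A`
is at least both `M(l)` and `M(-l)` (if `l ≥ 0`) or at most both (if `l ≤ 0`). Therefore
`0 ≤ (A - M(l)) * (A - M(-l)) = M(l) * M(-l) - A * B`, and `A * B ≤ M(l) * M(-l) ≤ exp(l²σ²)`.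
This is stronger than the required bound, since `σ² ≥ 0` (Jensen again) and `1/(2√2 b) ≤ 1/b`.
-/

open MeasureTheory Real

/-- Jensen's inequality for the exponential function. -/
lemma exp_integral_le {Ω : Type*} [MeasurableSpace Ω] (P : Measure Ω) [IsProbabilityMeasure P]
    (Y : Ω → ℝ) (hY : Integrable Y P) (hexp : Integrable (fun ω => exp (Y ω)) P) :
    exp (∫ ω, Y ω ∂P) ≤ ∫ ω, exp (Y ω) ∂P :=
  convexOn_exp.map_integral_le continuous_exp.continuousOn isClosed_univ
    (Filter.Eventually.of_forall fun _ => Set.mem_univ _) hY hexp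

/-- **Lemma (absolute value of a sub-exponential variable).**  If `X` is a centered real
random variable which is sub-exponential with parameters `(σ², b)` (i.e.
`E[exp(λX)] ≤ exp(λ²σ²/2)` for all `|λ| ≤ 1/b`), then `|X|` is sub-exponential with
parameters `(8σ², 2√2·b)`: `E[exp(λ(|X| - E|X|))] ≤ exp(8σ²λ²/2)` for all
`|λ| ≤ 1/(2√2·b)`. -/
theorem stmt_16 {Ω : Type*} [MeasurableSpace Ω] (P : Measure Ω) [IsProbabilityMeasure P]
    (X : Ω → ℝ) (σ2 b : ℝ) (hb : 0 < b)
    (hX_meas : Measurable X)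
    (hX_int : Integrable X P)
    (hmean : ∫ ω, X ω ∂P = 0)
    (hmgf_int : ∀ l : ℝ, |l| ≤ 1 / b → Integrable (fun ω => exp (l * X ω)) P)
    (hsubexp : ∀ l : ℝ, |l| ≤ 1 / b → ∫ ω, exp (l * X ω) ∂P ≤ exp (l ^ 2 * σ2 / 2)) :
    ∀ l : ℝ, |l| ≤ 1 / (2 * Real.sqrt 2 * b) →
      Integrable (fun ω => exp (l * (|X ω| - ∫ ω', |X ω'| ∂P))) P ∧
      ∫ ω, exp (l * (|X ω| - ∫ ω', |X ω'| ∂P)) ∂P ≤ exp (l ^ 2 * (8 * σ2) / 2) := by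
  -- The hypotheses at `l = 1 / b` force `σ2 ≥ 0`.
  have hσ : 0 ≤ σ2 := by
    have hle : |1 / b| ≤ 1 / b := (abs_of_pos (by positivity)).le
    have hJ := exp_integral_le P (fun ω => 1 / b * X ω) (hX_int.const_mul _) (hmgf_int _ hle)
    rw [integral_const_mul, hmean] at hJ
    have h1 : 1 / b * 0 ≤ (1 / b) ^ 2 * σ2 / 2 := exp_le_exp.mp (hJ.trans (hsubexp _ hle))
    by_contra hneg
    have h2 : 0 < (1 / b) ^ 2 := by positivity
    nlinarith
  intro l hl
  have hlb : |l| ≤ 1 / b := by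
    refine hl.trans (one_div_le_one_div_of_le hb ?_)
    have : (1 : ℝ) ≤ √2 := Real.one_le_sqrt.mpr (by norm_num)
    nlinarith
  have hlb' : |-l| ≤ 1 / b := by rwa [abs_neg]
  have iM := hmgf_int l hlb
  have iM' := hmgf_int (-l) hlb'
  have hsum : ∀ x : ℝ, exp (l * |x|) + exp (-l * |x|) = exp (l * x) + exp (-l * x) := by
    intro x
    rcases abs_choice x with h | h <;> rw [h]
    rw [mul_neg, mul_neg, neg_mul, neg_neg, add_comm]
  have iA : Integrable (fun ω => exp (l * |X ω|)) P := by
    refine (iM.add iM').mono' (by fun_prop) (Filter.Eventually.of_forall fun ω => ?_)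
    rw [Real.norm_of_nonneg (exp_pos _).le]
    exact (le_add_of_nonneg_right (exp_pos _).le).trans (hsum (X ω)).le
  have iB : Integrable (fun ω => exp (-l * |X ω|)) P := by
    refine (iM.add iM').mono' (by fun_prop) (Filter.Eventually.of_forall fun ω => ?_)
    rw [Real.norm_of_nonneg (exp_pos _).le]
    exact (le_add_of_nonneg_left (exp_pos _).le).trans (hsum (X ω)).le
  have hJ := exp_integral_le P (fun ω => -l * |X ω|) (hX_int.abs.const_mul _) iB
  rw [integral_const_mul] at hJ
  set m := ∫ ω, |X ω| ∂P with hm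
  have hsplit : (fun ω => exp (l * (|X ω| - m))) = fun ω => exp (l * |X ω|) * exp (-l * m) := by
    funext ω
    rw [← exp_add]
    ring_nf
  rw [hsplit]
  refine ⟨iA.mul_const _, ?_⟩
  rw [integral_mul_const]
  have hAB : ∫ ω, exp (l * |X ω|) ∂P + ∫ ω, exp (-l * |X ω|) ∂P
      = ∫ ω, exp (l * X ω) ∂P + ∫ ω, exp (-l * X ω) ∂P := by
    rw [← integral_add iA iB, ← integral_add iM iM']
    exact integral_congr_ae (Filter.Eventually.of_forall fun ω => hsum (X ω))
  have hprod : 0 ≤ (∫ ω, exp (l * |X ω|) ∂P - ∫ ω, exp (l * X ω) ∂P)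
      * (∫ ω, exp (l * |X ω|) ∂P - ∫ ω, exp (-l * X ω) ∂P) := by
    rcases le_total 0 l with h0 | h0
    · refine mul_nonneg (sub_nonneg.mpr (integral_mono iM iA fun ω => exp_le_exp.mpr ?_))
        (sub_nonneg.mpr (integral_mono iM' iA fun ω => exp_le_exp.mpr ?_))
      · nlinarith [le_abs_self (X ω)]
      · nlinarith [neg_abs_le (X ω)]
    · refine mul_nonneg_of_nonpos_of_nonpos
        (sub_nonpos.mpr (integral_mono iA iM fun ω => exp_le_exp.mpr ?_))
        (sub_nonpos.mpr (integral_mono iA iM' fun ω => exp_le_exp.mpr ?_))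
      · nlinarith [le_abs_self (X ω)]
      · nlinarith [neg_abs_le (X ω)]
  have hA0 : 0 ≤ ∫ ω, exp (l * |X ω|) ∂P := integral_nonneg fun ω => (exp_pos _).le
  have hM0 : 0 ≤ ∫ ω, exp (-l * X ω) ∂P := integral_nonneg fun ω => (exp_pos _).le
  calc (∫ ω, exp (l * |X ω|) ∂P) * exp (-l * m)
      ≤ (∫ ω, exp (l * |X ω|) ∂P) * ∫ ω, exp (-l * |X ω|) ∂P := by gcongr
    _ ≤ (∫ ω, exp (l * X ω) ∂P) * ∫ ω, exp (-l * X ω) ∂P := by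
        rw [eq_sub_of_add_eq' hAB]
        linarith
    _ ≤ exp (l ^ 2 * σ2 / 2) * exp ((-l) ^ 2 * σ2 / 2) :=
        mul_le_mul (hsubexp l hlb) (hsubexp (-l) hlb') hM0 (exp_pos _).le
    _ ≤ exp (l ^ 2 * (8 * σ2) / 2) := by
        rw [← exp_add]
        refine exp_le_exp.mpr ?_
        have : 0 ≤ l ^ 2 * σ2 := by positivity
        linarith
end

section
/- Let η and η̄ be g×m matrices with entries in a set Θ₀, let f: Θ₀×Θ₀ → R_{≥0} satisfy f(x,y)=0 ⟺ x=y, let A be a g×g matrix and B an m×m matrix with nonnegative entries, and set D_{kℓk'ℓ'} = f(η_{kℓ}, η̄_{k'ℓ'}) and Σ = Σ_{k,k'} Σ_{ℓ,ℓ'} A_{kk'} B_{ℓℓ'} D_{kℓk'ℓ'}. Assume all rows of η are pairwise distinct, all columns of η are pairwise distinct, and every row of A and every row of B contains a nonzero element. Then Σ = 0 if and only if A and B are (scaled) permutation matrices corresponding to permutations s of {1,…,g} and t of {1,…,m} (A_{ij}=0 for i≠s(j), B_{ij}=0 for i≠t(j)) and η̄_{kℓ} = η_{s(k)t(ℓ)}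 for all (k,ℓ). -/
/-!
All summands are nonnegative, so the sum vanishes iff `η k ℓ = ηbar k' ℓ'` whenever `A k k'` and
`B ℓ ℓ'` are both nonzero. If column `j` of `A` had nonzero entries in rows `k₁` and `k₂`, then,
pairing each `ℓ` with a nonzero entry of row `ℓ` of `B`, rows `k₁` and `k₂` of `η` would agree;
hence every column of `A` has at most one nonzero entry, and likewise for `B`. A square matrix with
at least one nonzero entry in each row and at most one in each column is supported on a
permutation (`exists_perm_of_rows_of_cols`).
-/

open scoped BigOperators

/-- Choosing a nonzero entry in each row gives an injective, hence bijective, map from rows to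
columns; its inverse is the required permutation. -/
lemma exists_perm_of_rows_of_cols {n : ℕ} (M : Matrix (Fin n) (Fin n) ℝ)
    (hrow : ∀ i, ∃ j, M i j ≠ 0)
    (hcol : ∀ i i' j, M i j ≠ 0 → M i' j ≠ 0 → i = i') :
    ∃ s : Equiv.Perm (Fin n), (∀ i j, i ≠ s j → M i j = 0) ∧ ∀ j, M (s j) j ≠ 0 := by
  choose a ha using hrow
  have hinj : Function.Injective a := fun i i' h => hcol i i' (a i) (ha i) (h ▸ ha i')
  let e := Equiv.ofBijective a (Finite.injective_iff_bijective.mp hinj)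
  have hs : ∀ j, M (e.symm j) j ≠ 0 := fun j => by
    have h := ha (e.symm j)
    rwa [show a (e.symm j) = j from e.apply_symm_apply j] at h
  exact ⟨e.symm, fun i j hij => by_contra fun h => hij (hcol i _ j h (hs j)), hs⟩

/-- **Lemma (characterization of zero sum for confusion-type matrices).**
Let `η` and `η̄` be `g × m` matrices with entries in `Θ₀`, `f : Θ₀ × Θ₀ → ℝ≥0` vanishing
exactly on the diagonal, `A` a `g × g` and `B` an `m × m` matrix with nonnegative entries,
`D_{kℓk'ℓ'} = f (η k ℓ) (η̄ k' ℓ')` and `Σ = Σ_{k,k'} Σ_{ℓ,ℓ'} A_{kk'} B_{ℓℓ'} D_{kℓk'ℓ'}`.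
If all rows of `η` are pairwise distinct, all columns of `η` are pairwise distinct, and every
row of `A` and of `B` contains a nonzero element, then `Σ = 0` iff `A` and `B` are (scaled)
permutation matrices for permutations `s`, `t` and `η̄ k ℓ = η (s k) (t ℓ)` for all `k, ℓ`. -/
theorem stmt_18 {g m : ℕ} {Θ₀ : Type*}
    (η ηbar : Fin g → Fin m → Θ₀) (f : Θ₀ → Θ₀ → ℝ)
    (hf_nonneg : ∀ x y, 0 ≤ f x y)
    (hf_zero : ∀ x y, f x y = 0 ↔ x = y)
    (A : Matrix (Fin g) (Fin g) ℝ) (B : Matrix (Fin m) (Fin m) ℝ)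
    (hA_nonneg : ∀ i j, 0 ≤ A i j) (hB_nonneg : ∀ i j, 0 ≤ B i j)
    (hrows : ∀ k k', k ≠ k' → ∃ ℓ, η k ℓ ≠ η k' ℓ)
    (hcols : ∀ ℓ ℓ', ℓ ≠ ℓ' → ∃ k, η k ℓ ≠ η k ℓ')
    (hArow : ∀ i, ∃ j, A i j ≠ 0)
    (hBrow : ∀ i, ∃ j, B i j ≠ 0) :
    (∑ k, ∑ k', ∑ ℓ, ∑ ℓ', A k k' * B ℓ ℓ' * f (η k ℓ) (ηbar k' ℓ')) = 0 ↔
      ∃ (s : Equiv.Perm (Fin g)) (t : Equiv.Perm (Fin m)),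
        (∀ i j, i ≠ s j → A i j = 0) ∧
        (∀ i j, i ≠ t j → B i j = 0) ∧
        (∀ k ℓ, ηbar k ℓ = η (s k) (t ℓ)) := by
  constructor
  · intro h
    have hterm : ∀ k k' ℓ ℓ', 0 ≤ A k k' * B ℓ ℓ' * f (η k ℓ) (ηbar k' ℓ') := fun k k' ℓ ℓ' =>
      mul_nonneg (mul_nonneg (hA_nonneg _ _) (hB_nonneg _ _)) (hf_nonneg _ _)
    have key : ∀ k k' ℓ ℓ', A k k' ≠ 0 → B ℓ ℓ' ≠ 0 → η k ℓ = ηbar k' ℓ' := by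
      intro k k' ℓ ℓ' hA hB
      have h1 := congrFun ((Fintype.sum_eq_zero_iff_of_nonneg fun k =>
        Finset.sum_nonneg fun k' _ => Finset.sum_nonneg fun ℓ _ =>
          Finset.sum_nonneg fun ℓ' _ => hterm k k' ℓ ℓ').mp h) k
      have h2 := congrFun ((Fintype.sum_eq_zero_iff_of_nonneg fun k' =>
        Finset.sum_nonneg fun ℓ _ => Finset.sum_nonneg fun ℓ' _ => hterm k k' ℓ ℓ').mp h1) k'
      have h3 := congrFun ((Fintype.sum_eq_zero_iff_of_nonneg fun ℓ =>
        Finset.sum_nonneg fun ℓ' _ => hterm k k' ℓ ℓ').mp h2) ℓ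
      have h4 := congrFun ((Fintype.sum_eq_zero_iff_of_nonneg fun ℓ' =>
        hterm k k' ℓ ℓ').mp h3) ℓ'
      exact (hf_zero _ _).mp ((mul_eq_zero.mp h4).resolve_left (mul_ne_zero hA hB))
    obtain ⟨s, hs, hs'⟩ := exists_perm_of_rows_of_cols A hArow fun i i' j hi hi' => by
      by_contra hne
      obtain ⟨ℓ, hℓ⟩ := hrows i i' hne
      obtain ⟨ℓ', hB⟩ := hBrow ℓ
      exact hℓ ((key _ _ _ _ hi hB).trans (key _ _ _ _ hi' hB).symm)
    obtain ⟨t, ht, ht'⟩ := exists_perm_of_rows_of_cols B hBrow fun i i' j hi hi' => by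
      by_contra hne
      obtain ⟨k, hk⟩ := hcols i i' hne
      obtain ⟨k', hA⟩ := hArow k
      exact hk ((key _ _ _ _ hA hi).trans (key _ _ _ _ hA hi').symm)
    exact ⟨s, t, hs, ht, fun k ℓ => (key _ _ _ _ (hs' k) (ht' ℓ)).symm⟩
  · rintro ⟨s, t, hs, ht, hη⟩
    refine Finset.sum_eq_zero fun k _ => Finset.sum_eq_zero fun k' _ =>
      Finset.sum_eq_zero fun ℓ _ => Finset.sum_eq_zero fun ℓ' _ => ?_
    by_cases hk : k = s k'
    · by_cases hℓ : ℓ = t ℓ'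
      · rw [(hf_zero _ _).mpr (by rw [hη, hk, hℓ]), mul_zero]
      · rw [ht _ _ hℓ, mul_zero, zero_mul]
    · rw [hs _ _ hk, zero_mul, zero_mul]
end

section
/- Let 𝒵₁ denote the set of label matrices z ∈ {0,1}^{n×g} (each row summing to 1) that are c-regular, i.e. min_k z_{·k} ≥ cn, and let M_c = 2·log((1−c)/c). For z ∈ 𝒵₁ let π̂(z) = (z_{·1}/n,…,z_{·g}/n), and p(z;π) = Π_k π_k^{z_{·k}}. Then for all z, z* ∈ 𝒵₁: | log p(z; π̂(z)) − log p(z*; π̂(z*)) | ≤ M_c · ‖z − z*‖₀, where ‖z − z*‖₀ = Σ_{i,k} 1{z_{ik} ≠ z*_{ik}}. -/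
/-! The map `a ↦ ∑ a_k log (a_k / n)` is convex, so its increment from `b` to `a` is at most its
gradient at `a` paired with `a - b`. Both count vectors sum to `n`, so the gradient may be shifted
by a constant. When `g ≥ 2`, regularity puts every `log (a_k / n)` in `[log c, log (1 - c)]`;
recentring at the midpoint of that interval bounds the increment by
`½ log ((1 - c) / c) * ‖a - b‖₁`, and `‖a - b‖₁ ≤ ‖z - z*‖₀`. Exchanging `z` and `z*` gives the
other sign (`logLik_sub_le`). If `g ≤ 1` or `n = 0` then `z = z*`. -/

open scoped BigOperators

/-- Hamming norm `‖z - z*‖₀ = Σ_{i,k} 1{z_{ik} ≠ z*_{ik}}` between the 0/1 indicator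
matrices of two label functions. -/
def hamNorm {n g : ℕ} (z zs : Fin n → Fin g) : ℕ :=
  (Finset.univ.filter fun p : Fin n × Fin g => ¬ ((z p.1 = p.2) ↔ (zs p.1 = p.2))).card

/-- `log p(z; π̂(z)) = Σ_k z_{·k} log (z_{·k} / n)`. -/
noncomputable def logLikMultinomial {n g : ℕ} (z : Fin n → Fin g) : ℝ :=
  ∑ k, (catCount z k : ℝ) * Real.log ((catCount z k : ℝ) / (n : ℝ))

lemma sum_catCount {n g : ℕ} (z : Fin n → Fin g) : ∑ k, (catCount z k : ℝ) = n := by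
  have h := Finset.card_eq_sum_card_fiberwise (f := z) (s := Finset.univ) (t := Finset.univ)
    (fun _ _ => Finset.mem_coe.2 (Finset.mem_univ _))
  rw [Finset.card_univ, Fintype.card_fin] at h
  unfold catCount
  exact_mod_cast h.symm

lemma hamNorm_comm {n g : ℕ} (z zs : Fin n → Fin g) : hamNorm z zs = hamNorm zs z := by
  unfold hamNorm
  congr 1
  ext p
  simp only [Finset.mem_filter, Finset.mem_univ, true_and]
  tauto

lemma sum_abs_catCount_sub_le {n g : ℕ} (z zs : Fin n → Fin g) :
    ∑ k, |(catCount z k : ℝ) - catCount zs k| ≤ hamNorm z zs := by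
  have h1 : (hamNorm z zs : ℝ) =
      ∑ k, ∑ i, if ¬ ((z i = k) ↔ (zs i = k)) then (1 : ℝ) else 0 := by
    unfold hamNorm
    rw [Finset.sum_comm, ← Fintype.sum_prod_type'
      (f := fun i k => if ¬ ((z i = k) ↔ (zs i = k)) then (1 : ℝ) else 0), Finset.sum_boole]
  have h2 : ∀ (w : Fin n → Fin g) (k : Fin g),
      (catCount w k : ℝ) = ∑ i, if w i = k then (1 : ℝ) else 0 := by
    intro w k
    unfold catCount
    rw [Finset.sum_boole]
  rw [h1]
  refine Finset.sum_le_sum fun k _ => ?_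
  rw [h2, h2, ← Finset.sum_sub_distrib]
  refine (Finset.abs_sum_le_sum_abs _ _).trans (Finset.sum_le_sum fun i _ => ?_)
  by_cases p : z i = k <;> by_cases q : zs i = k <;> simp [p, q]

/-- The tangent-line inequality for the convex function `x ↦ x log (x / n)`. -/
lemma mul_log_sub_le {a b n : ℝ} (ha : 0 < a) (hb : 0 < b) (hn : 0 < n) :
    a * Real.log (a / n) - b * Real.log (b / n) ≤ (a - b) * (Real.log (a / n) + 1) := by
  have h := Real.log_le_sub_one_of_pos (div_pos ha hb)
  have h2 := mul_le_mul_of_nonneg_left h hb.le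
  have h3 : b * (a / b - 1) = a - b := by field_simp
  rw [h3, Real.log_div ha.ne' hb.ne'] at h2
  rw [Real.log_div ha.ne' hn.ne', Real.log_div hb.ne' hn.ne']
  linarith

lemma catCount_le {n g : ℕ} (hg : 1 < g) {c : ℝ} (z : Fin n → Fin g)
    (hz : ∀ k, c * (n : ℝ) ≤ (catCount z k : ℝ)) (k : Fin g) :
    (catCount z k : ℝ) ≤ (1 - c) * n := by
  have : Nontrivial (Fin g) := Fin.nontrivial_iff_two_le.2 hg
  obtain ⟨j, hj⟩ := exists_ne k
  have h : ∑ l ∈ {k, j}, (catCount z l : ℝ) ≤ ∑ l, (catCount z l : ℝ) :=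
    Finset.sum_le_sum_of_subset_of_nonneg (Finset.subset_univ _) fun _ _ _ => Nat.cast_nonneg _
  rw [Finset.sum_pair hj.symm, sum_catCount] at h
  linarith [hz j]

lemma logLik_sub_le {n g : ℕ} (hn : 0 < n) (hg : 1 < g) {c : ℝ} (hc : 0 < c) (hc' : c ≤ 1 / 2)
    (z zs : Fin n → Fin g)
    (hz : ∀ k, c * (n : ℝ) ≤ (catCount z k : ℝ))
    (hzs : ∀ k, c * (n : ℝ) ≤ (catCount zs k : ℝ)) :
    logLikMultinomial z - logLikMultinomial zs ≤
      (2 * Real.log ((1 - c) / c)) * (hamNorm z zs : ℝ) := by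
  have hn' : (0 : ℝ) < n := by exact_mod_cast hn
  have hcn : 0 < c * n := mul_pos hc hn'
  have hc1 : 0 < 1 - c := by linarith
  have hL : 0 ≤ Real.log ((1 - c) / c) :=
    Real.log_nonneg ((one_le_div hc).2 (by linarith))
  have hLeq : Real.log ((1 - c) / c) = Real.log (1 - c) - Real.log c :=
    Real.log_div hc1.ne' hc.ne'
  set L := Real.log ((1 - c) / c)
  set m := (Real.log (1 - c) + Real.log c) / 2 with hm
  have hgrad : ∀ k, |Real.log ((catCount z k : ℝ) / n) - m| ≤ L / 2 := by
    intro k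
    have hlo : Real.log c ≤ Real.log ((catCount z k : ℝ) / n) :=
      Real.log_le_log hc ((le_div_iff₀ hn').2 (hz k))
    have hhi : Real.log ((catCount z k : ℝ) / n) ≤ Real.log (1 - c) :=
      Real.log_le_log (div_pos (hcn.trans_le (hz k)) hn')
        ((div_le_iff₀ hn').2 (catCount_le hg z hz k))
    rw [abs_le]
    constructor <;> linarith
  have hzero : ∑ k, ((catCount z k : ℝ) - catCount zs k) * (1 + m) = 0 := by
    rw [← Finset.sum_mul, Finset.sum_sub_distrib, sum_catCount, sum_catCount, sub_self, zero_mul]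
  calc logLikMultinomial z - logLikMultinomial zs
      = ∑ k, ((catCount z k : ℝ) * Real.log ((catCount z k : ℝ) / n)
          - (catCount zs k : ℝ) * Real.log ((catCount zs k : ℝ) / n)) := by
        unfold logLikMultinomial
        rw [Finset.sum_sub_distrib]
    _ ≤ ∑ k, ((catCount z k : ℝ) - catCount zs k) * (Real.log ((catCount z k : ℝ) / n) + 1) :=
        Finset.sum_le_sum fun k _ =>
          mul_log_sub_le (hcn.trans_le (hz k)) (hcn.trans_le (hzs k)) hn'
    _ = ∑ k, ((catCount z k : ℝ) - catCount zs k) * (Real.log ((catCount z k : ℝ) / n) - m) := by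
        rw [← sub_eq_zero, ← Finset.sum_sub_distrib, ← hzero]
        exact Finset.sum_congr rfl fun k _ => by ring
    _ ≤ ∑ k, |(catCount z k : ℝ) - catCount zs k| * (L / 2) := by
        refine Finset.sum_le_sum fun k _ => (le_abs_self _).trans ?_
        rw [abs_mul]
        exact mul_le_mul_of_nonneg_left (hgrad k) (abs_nonneg _)
    _ = (∑ k, |(catCount z k : ℝ) - catCount zs k|) * (L / 2) := by rw [Finset.sum_mul]
    _ ≤ hamNorm z zs * (L / 2) :=
        mul_le_mul_of_nonneg_right (sum_abs_catCount_sub_le z zs) (by linarith)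
    _ ≤ 2 * L * hamNorm z zs := by
        have : 0 ≤ L * (hamNorm z zs : ℝ) := mul_nonneg hL (Nat.cast_nonneg _)
        linarith

/-- **Lemma (likelihood ratio of regular assignments).**  If `z` and `z*` are `c`-regular
label matrices (every class has at least `c·n` members) and `M_c = 2 log((1-c)/c)`, then
`|log p(z; π̂(z)) - log p(z*; π̂(z*))| ≤ M_c ‖z - z*‖₀`. -/
theorem stmt_19 {n g : ℕ} (c : ℝ) (hc : 0 < c) (hc' : c ≤ 1 / 2)
    (z zs : Fin n → Fin g)
    (hz : ∀ k, c * (n : ℝ) ≤ (catCount z k : ℝ))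
    (hzs : ∀ k, c * (n : ℝ) ≤ (catCount zs k : ℝ)) :
    |logLikMultinomial z - logLikMultinomial zs| ≤
      (2 * Real.log ((1 - c) / c)) * (hamNorm z zs : ℝ) := by
  have hL : 0 ≤ Real.log ((1 - c) / c) :=
    Real.log_nonneg ((one_le_div hc).2 (by linarith))
  by_cases hng : 0 < n ∧ 1 < g
  · obtain ⟨hn, hg⟩ := hng
    have h1 := logLik_sub_le hn hg hc hc' z zs hz hzs
    have h2 := logLik_sub_le hn hg hc hc' zs z hzs hz
    rw [hamNorm_comm zs z] at h2
    exact abs_sub_le_iff.2 ⟨h1, h2⟩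
  · have hzz : z = zs := by
      funext i
      have hi := i.isLt
      ext
      have h1 := (z i).isLt
      have h2 := (zs i).isLt
      omega
    rw [hzz, sub_self, abs_zero]
    positivity
end
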